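/- Let d ≥ 1 and fix an integer s > (d+2)d + 3. For Lebesgue-almost every α ∈ [0,1]^d there is a constant C(α) such that for all N ≥ 3, |D̄₅(α,x;N)| ≤ C(α)·log N, where D̄₅ is the 'constant part' of the remaining Fourier sum (the part of D̄₄ with no exponential factor). -/

import Mathlib

open MeasureTheory Finset

noncomputable section

/-- Distance from `y` to the nearest integer. -/
def nid (y : ℝ) : ℝ := |y - round y|

/-- The Fejér-type ratio `sin(2πt)/(2πt)`. -/
def sr (t : ℝ) : ℝ := Real.sin (2 * Real.pi * t) / (2 * Real.pi * t)

/-- `θ_i = n₁α_i − n_{i+1}`. -/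
def th {d : ℕ} (α : Fin d → ℝ) (n : Fin (d + 1) → ℤ) (i : Fin d) : ℝ :=
  (n 0 : ℝ) * α i - (n i.succ : ℝ)

/-- `g(n,α;N) = (sin(2πn₁/N²)/(2πn₁/N²))²·∏ (sin(2πθ_i)/(2πθ_i))²`. -/
def gterm (d N : ℕ) (α : Fin d → ℝ) (n : Fin (d + 1) → ℤ) : ℝ :=
  (sr ((n 0 : ℝ) / (N : ℝ) ^ 2)) ^ 2 * ∏ i : Fin d, (sr (th α n i)) ^ 2

/-- `U₄(α;N)`: `1 < |n₁| < N²/4`, each `n_{i+1}` nearest integer to `n₁α_i`, and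
`|n₁|·∏‖n₁α_i‖ > (log N)^s`. -/
def U4 (d s N : ℕ) (α : Fin d → ℝ) : Set (Fin (d + 1) → ℤ) :=
  {n | 1 < |(n 0 : ℝ)| ∧ |(n 0 : ℝ)| < (N : ℝ) ^ 2 / 4 ∧
       (∀ i : Fin d, |th α n i| = nid ((n 0 : ℝ) * α i)) ∧
       Real.log N ^ s < |(n 0 : ℝ)| * ∏ i : Fin d, nid ((n 0 : ℝ) * α i)}

/-!
Replacing `n` by `-n` multiplies a summand by `(-1) ^ (d + 1)`, so the sum vanishes for even `d`
and is twice the sum over `n₁ > 0` for odd `d`. Fix all coordinates of `α` but one, say `t`. Abel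
summation removes the factor `sr (n₁ / N ^ 2) ^ 2`, and there remain sums
`∑ n < M, c n * truncKernel (z n / L) (n * t)` with `L = (log N) ^ s` and `|c n| * z n ≤ 1`.

The truncated kernel is odd with mean zero, and its Fourier coefficients are `O(min 1 (X / |k|))`.
The Cauchy–Schwarz inequality over the divisors of a frequency then bounds the mean square of such
a sum by `∑ n, c n ^ 2 * τ(n) * (z n / L) * (1 + log⁺ (z n / L))`, where `τ(n)` counts divisors;
the factor `1 / L` beats the powers of `log N` that come from `∑ τ(n) |c n|`, which is
polylogarithmic for almost every choice of the other coordinates. The Rademacher–Menshov method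
makes this uniform in `M`, and Borel–Cantelli makes it uniform in `L` along a net of scales with
ratios tending to `1`. Between two scales the kernel changes only on short windows in `n * t`, whose
means are summed trivially and whose fluctuations obey the same mean square bound.
-/

/-! ### Fourier coefficients of dilates -/

/-- Bounded measurable functions on the circle `ℝ / ℤ`, encoded as functions on `ℝ`. -/
structure IsBoundedPeriodic (f : ℝ → ℝ) : Prop where
  measurable : Measurable f
  periodic : Function.Periodic f 1
  exists_bound : ∃ B, ∀ x, |f x| ≤ B

/-- The `k`-th Fourier coefficient of `f` over the period `[0, 1]`. -/
def unitFourierCoeff (f : ℝ → ℝ) (k : ℤ) : ℂ :=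
  fourierCoeffOn zero_lt_one (fun x => (f x : ℂ)) k

theorem unitFourierCoeff_eq_integral (f : ℝ → ℝ) (k : ℤ) :
    unitFourierCoeff f k =
      ∫ x in (0 : ℝ)..1, Complex.exp (-(2 * Real.pi * Complex.I * k * x)) * f x := by
  rw [unitFourierCoeff, fourierCoeffOn_eq_integral]
  simp only [sub_zero, div_one, one_smul, fourier_coe_apply, smul_eq_mul]
  congr! 3 with x
  push_cast
  ring_nf

theorem unitFourierCoeff_zero (f : ℝ → ℝ) :
    unitFourierCoeff f 0 = ((∫ x in (0 : ℝ)..1, f x : ℝ) : ℂ) := by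
  simp [unitFourierCoeff_eq_integral, intervalIntegral.integral_ofReal]

theorem periodic_exp_mul {f : ℝ → ℝ} (hf : Function.Periodic f 1) (k : ℤ) :
    Function.Periodic
      (fun x : ℝ => Complex.exp (-(2 * Real.pi * Complex.I * k * x)) * (f x : ℂ)) 1 := by
  intro x
  simp only [hf x]
  congr 1
  rw [Complex.exp_eq_exp_iff_exists_int]
  exact ⟨-k, by push_cast; ring⟩

theorem unitFourierCoeff_eq_zero_of_periodic {f : ℝ → ℝ} (hf : Function.Periodic f 1) {a : ℝ}
    (hfa : Function.Periodic f a) {k : ℤ} (hka : ∀ m : ℤ, k * a ≠ m) :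
    unitFourierCoeff f k = 0 := by
  set G := fun x : ℝ => Complex.exp (-(2 * Real.pi * Complex.I * k * x)) * (f x : ℂ) with hG
  set ω := Complex.exp (-(2 * Real.pi * Complex.I * (k * a))) with hω
  have hshift (x : ℝ) : G (x + a) = ω * G x := by
    simp only [hG, hω, hfa x]
    rw [← mul_assoc, ← Complex.exp_add]
    push_cast
    ring_nf
  have hinv : ω * ∫ x in (0 : ℝ)..1, G x = ∫ x in (0 : ℝ)..1, G x := by
    rw [← intervalIntegral.integral_const_mul, ← funext hshift,
      intervalIntegral.integral_comp_add_right, zero_add, add_comm 1]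
    simpa using (periodic_exp_mul hf k).intervalIntegral_add_eq a 0
  have hω_ne : ω ≠ 1 := by
    rw [hω, Ne, Complex.exp_eq_one_iff]
    rintro ⟨m, hm⟩
    refine hka (-m) ?_
    have hm' : (k * a : ℂ) = -m :=
      mul_left_cancel₀ Complex.two_pi_I_ne_zero (by linear_combination -hm)
    exact_mod_cast hm'
  rw [unitFourierCoeff_eq_integral]
  exact (mul_eq_zero.mp (by rw [sub_mul, hinv, one_mul, sub_self])).resolve_left
    (sub_ne_zero.mpr hω_ne)

theorem unitFourierCoeff_dilate_of_not_dvd {f : ℝ → ℝ} (hf : Function.Periodic f 1) {n : ℕ}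
    (hn : n ≠ 0) {k : ℤ} (hk : ¬ (n : ℤ) ∣ k) : unitFourierCoeff (fun t => f (n * t)) k = 0 := by
  have hn' : (n : ℝ) ≠ 0 := by exact_mod_cast hn
  refine unitFourierCoeff_eq_zero_of_periodic (a := (n : ℝ)⁻¹) (fun x => ?_) (fun x => ?_)
    fun m hm => hk ⟨m, ?_⟩
  · simpa only [mul_add, mul_one] using hf.nat_mul n (n * x)
  · simp only [mul_add, mul_inv_cancel₀ hn', hf (n * x)]
  · rw [← div_eq_mul_inv, div_eq_iff hn', mul_comm] at hm
    exact_mod_cast hm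

namespace IsBoundedPeriodic

variable {f g : ℝ → ℝ}

theorem intervalIntegrable_exp_mul (hf : IsBoundedPeriodic f) (k : ℤ) (a b : ℝ) :
    IntervalIntegrable
      (fun x : ℝ => Complex.exp (-(2 * Real.pi * Complex.I * k * x)) * (f x : ℂ)) volume a b := by
  obtain ⟨B, hB⟩ := hf.exists_bound
  have hfi : IntervalIntegrable (fun x => (f x : ℂ)) volume a b := by
    rw [intervalIntegrable_iff]
    refine Measure.integrableOn_of_bounded (M := B) (by simp)
      (Complex.measurable_ofReal.comp hf.measurable).aestronglyMeasurable ?_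
    exact Filter.Eventually.of_forall fun x => by simpa using hB x
  exact hfi.continuousOn_mul (by fun_prop)

theorem intervalIntegrable (hf : IsBoundedPeriodic f) (a b : ℝ) :
    IntervalIntegrable f volume a b := by
  obtain ⟨B, hB⟩ := hf.exists_bound
  rw [intervalIntegrable_iff]
  exact Measure.integrableOn_of_bounded (M := B) (by simp) hf.measurable.aestronglyMeasurable
    (Filter.Eventually.of_forall hB)

theorem dilate (hf : IsBoundedPeriodic f) (n : ℕ) : IsBoundedPeriodic fun t => f (n * t) where
  measurable := hf.measurable.comp (measurable_const_mul _)
  periodic x := by simpa only [mul_add, mul_one] using hf.periodic.nat_mul n (n * x)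
  exists_bound := hf.exists_bound.imp fun _ hB x => hB _

theorem sub_const (hf : IsBoundedPeriodic f) (c : ℝ) : IsBoundedPeriodic fun t => f t - c where
  measurable := hf.measurable.sub_const c
  periodic x := by simp only [hf.periodic x]
  exists_bound := hf.exists_bound.imp' (· + |c|) fun _ hB x =>
    (abs_sub _ _).trans (by gcongr; exact hB x)

theorem const_mul (hf : IsBoundedPeriodic f) (c : ℝ) : IsBoundedPeriodic fun t => c * f t where
  measurable := hf.measurable.const_mul c
  periodic x := by simp only [hf.periodic x]
  exists_bound := hf.exists_bound.imp' (|c| * ·) fun _ hB x => by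
    rw [abs_mul]; gcongr; exact hB x

theorem sq (hf : IsBoundedPeriodic f) : IsBoundedPeriodic fun t => f t ^ 2 where
  measurable := hf.measurable.pow_const 2
  periodic x := by simp only [hf.periodic x]
  exists_bound := hf.exists_bound.imp' (· ^ 2) fun _ hB x => by
    rw [abs_pow]; gcongr; exact hB x

theorem add (hf : IsBoundedPeriodic f) (hg : IsBoundedPeriodic g) :
    IsBoundedPeriodic fun t => f t + g t where
  measurable := hf.measurable.add hg.measurable
  periodic x := by simp only [hf.periodic x, hg.periodic x]
  exists_bound := by
    obtain ⟨B, hB⟩ := hf.exists_bound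
    obtain ⟨C, hC⟩ := hg.exists_bound
    exact ⟨B + C, fun x => (abs_add_le _ _).trans (add_le_add (hB x) (hC x))⟩

theorem sum {I : Finset ℕ} {f : ℕ → ℝ → ℝ} (hf : ∀ n ∈ I, IsBoundedPeriodic (f n)) :
    IsBoundedPeriodic fun t => ∑ n ∈ I, f n t := by
  induction I using Finset.cons_induction with
  | empty => exact ⟨by simp, fun _ => rfl, 0, by simp⟩
  | cons m I hm ih =>
    simp only [sum_cons]
    exact (hf m (mem_cons_self m I)).add (ih fun n hn => hf n (mem_cons_of_mem hn))

theorem hasSum_sq_norm_unitFourierCoeff (hf : IsBoundedPeriodic f) :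
    HasSum (fun k => ‖unitFourierCoeff f k‖ ^ 2) (∫ x in (0 : ℝ)..1, f x ^ 2) := by
  obtain ⟨B, hB⟩ := hf.exists_bound
  have hL2 : MemLp (fun x => (f x : ℂ)) 2 (volume.restrict (Set.Ioc (0 : ℝ) 1)) :=
    .of_bound (Complex.measurable_ofReal.comp hf.measurable).aestronglyMeasurable B
      (.of_forall fun x => by simpa using hB x)
  simpa [unitFourierCoeff] using hasSum_sq_fourierCoeffOn zero_lt_one hL2

theorem unitFourierCoeff_sum {I : Finset ℕ} {f : ℕ → ℝ → ℝ}
    (hf : ∀ n ∈ I, IsBoundedPeriodic (f n)) (a : ℕ → ℝ) (k : ℤ) :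
    unitFourierCoeff (fun t => ∑ n ∈ I, a n * f n t) k =
      ∑ n ∈ I, (a n : ℂ) * unitFourierCoeff (f n) k := by
  simp_rw [unitFourierCoeff_eq_integral, Complex.ofReal_sum, Complex.ofReal_mul, mul_sum,
    mul_left_comm _ (a _ : ℂ)]
  rw [intervalIntegral.integral_finsetSum fun n hn =>
    ((hf n hn).intervalIntegrable_exp_mul k 0 1).const_mul _]
  simp_rw [intervalIntegral.integral_const_mul]

theorem unitFourierCoeff_dilate_mul (hf : IsBoundedPeriodic f) {n : ℕ} (hn : n ≠ 0) (l : ℤ) :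
    unitFourierCoeff (fun t => f (n * t)) (n * l) = unitFourierCoeff f l := by
  have hn' : (n : ℝ) ≠ 0 := by exact_mod_cast hn
  set h := fun x : ℝ => Complex.exp (-(2 * Real.pi * Complex.I * l * x)) * (f x : ℂ)
  have hperiods : ∫ x in (0 : ℝ)..n, h x = n * ∫ x in (0 : ℝ)..1, h x := by
    simpa using (periodic_exp_mul hf.periodic l).intervalIntegral_add_zsmul_eq n 0
      (hf.intervalIntegrable_exp_mul l)
  calc unitFourierCoeff (fun t => f (n * t)) (n * l) = ∫ x in (0 : ℝ)..1, h (n * x) := by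
        rw [unitFourierCoeff_eq_integral]
        congr! 3 with x
        push_cast
        ring_nf
    _ = unitFourierCoeff f l := by
        rw [intervalIntegral.integral_comp_mul_left h hn', mul_zero, mul_one, hperiods,
          unitFourierCoeff_eq_integral, Complex.real_smul, Complex.ofReal_inv,
          Complex.ofReal_natCast, inv_mul_cancel_left₀ (by exact_mod_cast hn)]

end IsBoundedPeriodic

/-! ### Divisor sums -/

theorem sum_Ico_filter_dvd_le {h : ℕ → ℝ} (hh : ∀ k, 0 ≤ h k) {n : ℕ} (hn : n ≠ 0) (J : ℕ) :
    ∑ k ∈ Ico 1 J with n ∣ k, h k ≤ ∑ j ∈ Ico 1 J, h (n * j) := by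
  rw [← sum_image (f := h) (g := (n * ·)) (mul_right_injective₀ hn).injOn]
  refine sum_le_sum_of_subset_of_nonneg (fun k hk => ?_) fun _ _ _ => hh _
  obtain ⟨hk, j, rfl⟩ := mem_filter.mp hk
  rw [mem_Ico] at hk
  have hj : j ≤ n * j := Nat.le_mul_of_pos_left j (Nat.pos_of_ne_zero hn)
  have hj' : j ≠ 0 := by rintro rfl; simp at hk
  exact mem_image_of_mem _ (mem_Ico.mpr ⟨by omega, by omega⟩)

theorem card_divisors_mul_le (m n : ℕ) : #(m * n).divisors ≤ #m.divisors * #n.divisors := by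
  rw [Nat.divisors_mul]
  exact card_mul_le

theorem sum_card_divisors_mul_le {h : ℕ → ℝ} (hh : ∀ k, 0 ≤ h k) (J : ℕ) :
    ∑ j ∈ Ico 1 J, (#j.divisors : ℝ) * h j ≤ ∑ a ∈ Ico 1 J, ∑ b ∈ Ico 1 J, h (a * b) := by
  have hdivisors : ∀ j ∈ Ico 1 J, (#j.divisors : ℝ) * h j =
      ∑ a ∈ Ico 1 J, if a ∣ j then h j else 0 := by
    intro j hj
    rw [mem_Ico] at hj
    rw [← sum_filter, sum_const, nsmul_eq_mul]
    congr 3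
    ext a
    simp only [Nat.mem_divisors, mem_filter, mem_Ico]
    refine ⟨fun ⟨ha, _⟩ => ⟨⟨Nat.pos_of_dvd_of_pos ha hj.1, ?_⟩, ha⟩, fun ⟨_, ha⟩ => ⟨ha, by omega⟩⟩
    exact (Nat.le_of_dvd hj.1 ha).trans_lt hj.2
  rw [sum_congr rfl hdivisors, sum_comm]
  refine sum_le_sum fun a ha => ?_
  rw [← sum_filter]
  exact sum_Ico_filter_dvd_le hh (by rw [mem_Ico] at ha; omega) J

theorem sum_inv_sq_Ico_filter_gt_le (m J : ℕ) :
    ∑ b ∈ Ico 1 J with m < b, ((b : ℝ) ^ 2)⁻¹ ≤ 2 / (m + 1) := by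
  refine (sum_le_sum_of_subset_of_nonneg ?_ fun _ _ _ => by positivity).trans
    (sum_Ioo_inv_sq_le (α := ℝ) m J)
  intro b hb
  simp only [mem_filter, mem_Ico, mem_Ioo] at hb ⊢
  omega

theorem sum_inv_Ico_filter_le_le (m J : ℕ) :
    ∑ b ∈ Ico 1 J with b ≤ m, (b : ℝ)⁻¹ ≤ 1 + Real.log m := by
  have hharmonic := harmonic_le_one_add_log m
  rw [harmonic_eq_sum_Icc] at hharmonic
  push_cast at hharmonic
  refine (sum_le_sum_of_subset_of_nonneg ?_ fun _ _ _ => by positivity).trans hharmonic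
  intro b hb
  simp only [mem_filter, mem_Ico, mem_Icc] at hb ⊢
  omega

theorem sum_min_one_div_sq_le {Y : ℝ} (hY : 0 ≤ Y) (m J : ℕ) :
    ∑ b ∈ Ico 1 J, min 1 (Y / b) ^ 2 ≤ m + Y ^ 2 * (2 / (m + 1)) := by
  have hmin (b : ℕ) : 0 ≤ min 1 (Y / b) := by positivity
  rw [← sum_filter_add_sum_filter_not (Ico 1 J) (· ≤ m)]
  gcongr ?_ + ?_
  · calc ∑ b ∈ Ico 1 J with b ≤ m, min 1 (Y / b) ^ 2 ≤ ∑ b ∈ Ico 1 J with b ≤ m, 1 :=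
          sum_le_sum fun b _ => pow_le_one₀ (hmin b) (min_le_left _ _)
      _ ≤ m := by
          rw [sum_const, nsmul_one, Nat.cast_le]
          conv_rhs => rw [← Nat.add_sub_cancel (n := m) (m := 1), ← Nat.card_Icc 1 m]
          refine card_le_card fun b hb => ?_
          simp only [mem_filter, mem_Ico, mem_Icc] at hb ⊢
          omega
  · calc ∑ b ∈ Ico 1 J with ¬ b ≤ m, min 1 (Y / b) ^ 2
        ≤ ∑ b ∈ Ico 1 J with m < b, Y ^ 2 * ((b : ℝ) ^ 2)⁻¹ := by
          simp only [not_le]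
          refine sum_le_sum fun b _ => ?_
          rw [← div_eq_mul_inv, ← div_pow]
          exact pow_le_pow_left₀ (hmin b) (min_le_right _ _) 2
      _ ≤ Y ^ 2 * (2 / (m + 1)) := by
          rw [← mul_sum]
          gcongr
          exact sum_inv_sq_Ico_filter_gt_le m J

theorem sum_min_one_div_sq_le_of_one_le {Y : ℝ} (hY : 1 ≤ Y) (J : ℕ) :
    ∑ b ∈ Ico 1 J, min 1 (Y / b) ^ 2 ≤ 3 * Y := by
  have hfloor := Nat.floor_le (zero_le_one.trans hY)
  have hfloor' := Nat.lt_floor_add_one Y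
  calc _ ≤ _ := sum_min_one_div_sq_le (zero_le_one.trans hY) ⌊Y⌋₊ J
    _ ≤ Y + Y ^ 2 * (2 / Y) := by gcongr
    _ = 3 * Y := by field_simp; norm_num

theorem sum_card_divisors_mul_min_sq_le {X : ℝ} (hX : 0 ≤ X) (J : ℕ) :
    ∑ j ∈ Ico 1 J, (#j.divisors : ℝ) * min 1 (X / j) ^ 2 ≤ 7 * X * (1 + Real.posLog X) := by
  set m := ⌊X⌋₊
  have hm : (m : ℝ) ≤ X := Nat.floor_le hX
  have hlog : Real.log m ≤ Real.posLog X :=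
    Real.log_of_nat_eq_posLog.symm.trans_le <|
      Real.monotoneOn_posLog (Set.mem_Ici.mpr m.cast_nonneg) (Set.mem_Ici.mpr hX) hm
  have hsmall : ∀ a ∈ Ico 1 J, a ≤ m →
      ∑ b ∈ Ico 1 J, min 1 (X / (a * b : ℕ)) ^ 2 ≤ 3 * X * (a : ℝ)⁻¹ := by
    intro a ha ham
    have ha' : (0 : ℝ) < a := by exact_mod_cast (mem_Ico.mp ha).1
    have ham' : (a : ℝ) ≤ X := (Nat.le_floor_iff hX).mp ham
    simpa only [div_div, Nat.cast_mul, div_eq_mul_inv, mul_inv, mul_assoc] using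
      sum_min_one_div_sq_le_of_one_le ((one_le_div ha').mpr ham') J
  have hlarge (a : ℕ) :
      ∑ b ∈ Ico 1 J, min 1 (X / (a * b : ℕ)) ^ 2 ≤ 2 * X ^ 2 * ((a : ℝ) ^ 2)⁻¹ := by
    refine (le_of_eq ?_).trans ((sum_min_one_div_sq_le (Y := X / a) (by positivity) 0 J).trans
      (le_of_eq ?_))
    · simp [div_div]
    · push_cast; ring
  calc ∑ j ∈ Ico 1 J, (#j.divisors : ℝ) * min 1 (X / j) ^ 2
      ≤ ∑ a ∈ Ico 1 J, ∑ b ∈ Ico 1 J, min 1 (X / (a * b : ℕ)) ^ 2 :=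
        sum_card_divisors_mul_le (h := fun j => min 1 (X / j) ^ 2) (fun _ => sq_nonneg _) J
    _ ≤ ∑ a ∈ Ico 1 J with a ≤ m, 3 * X * (a : ℝ)⁻¹ +
          ∑ a ∈ Ico 1 J with m < a, 2 * X ^ 2 * ((a : ℝ) ^ 2)⁻¹ := by
        rw [← sum_filter_add_sum_filter_not (Ico 1 J) (· ≤ m)]
        simp only [not_le]
        gcongr with a ha a
        · exact hsmall a (mem_filter.mp ha).1 (mem_filter.mp ha).2
        · exact hlarge a
    _ ≤ 3 * X * (1 + Real.posLog X) + 2 * X ^ 2 * (2 / (m + 1)) := by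
        rw [← mul_sum, ← mul_sum]
        gcongr
        · exact (sum_inv_Ico_filter_le_le m J).trans (by gcongr)
        · exact sum_inv_sq_Ico_filter_gt_le m J
    _ ≤ 3 * X * (1 + Real.posLog X) + 4 * X := by
        refine add_le_add_right ?_ _
        rw [← mul_div_assoc, div_le_iff₀ (by positivity)]
        nlinarith [Nat.lt_floor_add_one X]
    _ ≤ 7 * X * (1 + Real.posLog X) := by
        nlinarith [mul_nonneg hX (Real.posLog_nonneg (x := X))]

theorem sum_card_divisors_mul_min_sq_filter_dvd_le {X : ℝ} (hX : 0 ≤ X) {n : ℕ} (hn : n ≠ 0)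
    (J : ℕ) :
    ∑ k ∈ Ico 1 J with n ∣ k, (#k.divisors : ℝ) * min 1 (X * n / k) ^ 2 ≤
      #n.divisors * (7 * X * (1 + Real.posLog X)) := by
  have hn' : (n : ℝ) ≠ 0 := by exact_mod_cast hn
  calc _ ≤ ∑ j ∈ Ico 1 J, (#(n * j).divisors : ℝ) * min 1 (X * n / (n * j : ℕ)) ^ 2 :=
        sum_Ico_filter_dvd_le (h := fun k => (#k.divisors : ℝ) * min 1 (X * n / k) ^ 2)
          (fun k => by positivity) hn J
    _ ≤ ∑ j ∈ Ico 1 J, (#n.divisors : ℝ) * (#j.divisors * min 1 (X / j) ^ 2) := by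
        refine sum_le_sum fun j _ => ?_
        rw [← mul_assoc, mul_comm X, Nat.cast_mul n j, mul_div_mul_left _ _ hn']
        gcongr
        exact_mod_cast card_divisors_mul_le n j
    _ ≤ #n.divisors * (7 * X * (1 + Real.posLog X)) := by
        rw [← mul_sum]
        gcongr
        exact sum_card_divisors_mul_min_sq_le hX J

/-! ### The mean square of a sum of dilates -/

/-- Mean-zero functions on the circle whose Fourier coefficients have the size of those of a
truncation of `1 / x` at distance `1 / X` from the integers, up to the constant `A`. -/
structure HasFourierDecay (f : ℝ → ℝ) (X A : ℝ) : Prop extends IsBoundedPeriodic f where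
  coeff_zero : unitFourierCoeff f 0 = 0
  norm_coeff_le : ∀ k : ℤ, k ≠ 0 → ‖unitFourierCoeff f k‖ ≤ A * min 1 (X / |(k : ℝ)|)

theorem HasFourierDecay.norm_coeff_dilate_le {f : ℝ → ℝ} {X A : ℝ} (hf : HasFourierDecay f X A)
    {n : ℕ} (hn : n ≠ 0) {k : ℤ} (hk : k ≠ 0) :
    ‖unitFourierCoeff (fun t => f (n * t)) k‖ ≤
      if n ∣ k.natAbs then A * min 1 (X * n / k.natAbs) else 0 := by
  split_ifs with hnk
  · obtain ⟨l, rfl⟩ := Int.natCast_dvd.mpr hnk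
    have hn' : (n : ℝ) ≠ 0 := by exact_mod_cast hn
    rw [hf.unitFourierCoeff_dilate_mul hn, Int.natAbs_mul, Int.natAbs_natCast, Nat.cast_mul,
      mul_comm X, mul_div_mul_left _ _ hn', Nat.cast_natAbs, Int.cast_abs]
    exact hf.norm_coeff_le l (right_ne_zero_of_mul hk)
  · rw [unitFourierCoeff_dilate_of_not_dvd hf.periodic hn fun h => hnk (Int.natCast_dvd.mp h),
      norm_zero]

section MeanSquare

variable {I : Finset ℕ} {f : ℕ → ℝ → ℝ} {a X : ℕ → ℝ} {A : ℝ}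

theorem isBoundedPeriodic_sum_dilates (hf : ∀ n ∈ I, IsBoundedPeriodic (f n)) (a : ℕ → ℝ) :
    IsBoundedPeriodic fun t => ∑ n ∈ I, a n * f n (n * t) :=
  .sum fun n hn => ((hf n hn).dilate n).const_mul (a n)

theorem unitFourierCoeff_sum_dilates_zero (hf : ∀ n ∈ I, HasFourierDecay (f n) (X n) A)
    (ha : a 0 = 0) : unitFourierCoeff (fun t => ∑ n ∈ I, a n * f n (n * t)) 0 = 0 := by
  rw [IsBoundedPeriodic.unitFourierCoeff_sum fun n hn => (hf n hn).dilate n]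
  refine sum_eq_zero fun n hn => ?_
  rcases eq_or_ne n 0 with rfl | hn0
  · simp [ha]
  · simpa [(hf n hn).coeff_zero] using
      congr((a n : ℂ) * $((hf n hn).unitFourierCoeff_dilate_mul hn0 0))

theorem sq_norm_unitFourierCoeff_sum_dilates_le (hf : ∀ n ∈ I, HasFourierDecay (f n) (X n) A)
    (ha : a 0 = 0) {k : ℤ} (hk : k ≠ 0) :
    ‖unitFourierCoeff (fun t => ∑ n ∈ I, a n * f n (n * t)) k‖ ^ 2 ≤
      ∑ n ∈ I with n ∣ k.natAbs,
        A ^ 2 * a n ^ 2 * (#k.natAbs.divisors * min 1 (X n * n / k.natAbs) ^ 2) := by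
  rw [IsBoundedPeriodic.unitFourierCoeff_sum fun n hn => (hf n hn).dilate n]
  have hterm : ∀ n ∈ I, ‖(a n : ℂ) * unitFourierCoeff (fun t => f n (n * t)) k‖ ≤
      if n ∣ k.natAbs then |a n| * (A * min 1 (X n * n / k.natAbs)) else 0 := by
    intro n hn
    rcases eq_or_ne n 0 with rfl | hn0
    · simp [ha]
    · rw [norm_mul, Complex.norm_real, Real.norm_eq_abs, ← mul_ite_zero]
      gcongr
      exact (hf n hn).norm_coeff_dilate_le hn0 hk
  calc ‖∑ n ∈ I, (a n : ℂ) * unitFourierCoeff (fun t => f n (n * t)) k‖ ^ 2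
      ≤ (∑ n ∈ I with n ∣ k.natAbs, |a n| * (A * min 1 (X n * n / k.natAbs))) ^ 2 := by
        rw [sum_filter]
        gcongr
        exact norm_sum_le_of_le I hterm
    _ ≤ #{n ∈ I | n ∣ k.natAbs} *
          ∑ n ∈ I with n ∣ k.natAbs, (|a n| * (A * min 1 (X n * n / k.natAbs))) ^ 2 :=
        sq_sum_le_card_mul_sum_sq
    _ ≤ #k.natAbs.divisors *
          ∑ n ∈ I with n ∣ k.natAbs, (|a n| * (A * min 1 (X n * n / k.natAbs))) ^ 2 := by
        gcongr
        intro n hn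
        exact Nat.mem_divisors.mpr ⟨(mem_filter.mp hn).2, Int.natAbs_ne_zero.mpr hk⟩
    _ = _ := by
        rw [mul_sum]
        refine sum_congr rfl fun n _ => ?_
        rw [mul_pow, sq_abs]
        ring

/-- The Cauchy–Schwarz inequality at a frequency `k` costs the number of divisors of `k`. -/
theorem integral_sq_sum_dilates_le (hf : ∀ n ∈ I, HasFourierDecay (f n) (X n) A)
    (hX : ∀ n ∈ I, 0 ≤ X n) (ha : a 0 = 0) :
    ∫ t in (0 : ℝ)..1, (∑ n ∈ I, a n * f n (n * t)) ^ 2 ≤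
      14 * A ^ 2 * ∑ n ∈ I, a n ^ 2 * (#n.divisors * (X n * (1 + Real.posLog (X n)))) := by
  set c : ℤ → ℝ := fun k => ‖unitFourierCoeff (fun t => ∑ n ∈ I, a n * f n (n * t)) k‖ ^ 2
  set G : ℕ → ℝ := fun k => ∑ n ∈ I with n ∣ k,
    A ^ 2 * a n ^ 2 * (#k.divisors * min 1 (X n * n / k) ^ 2)
  have hc0 : c 0 = 0 := by simp [c, unitFourierCoeff_sum_dilates_zero hf ha]
  have hcG (k : ℤ) (hk : k ≠ 0) : c k ≤ G k.natAbs :=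
    sq_norm_unitFourierCoeff_sum_dilates_le hf ha hk
  have hG (J : ℕ) : ∑ k ∈ Ico 1 J, G k ≤
      7 * A ^ 2 * ∑ n ∈ I, a n ^ 2 * (#n.divisors * (X n * (1 + Real.posLog (X n)))) := by
    simp only [G, sum_filter]
    rw [sum_comm, mul_sum]
    refine sum_le_sum fun n hn => ?_
    rcases eq_or_ne n 0 with rfl | hn0
    · simp [ha]
    rw [← sum_filter, ← mul_sum]
    calc _ ≤ A ^ 2 * a n ^ 2 * (#n.divisors * (7 * X n * (1 + Real.posLog (X n)))) := by
          gcongr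
          exact sum_card_divisors_mul_min_sq_filter_dvd_le (hX n hn) hn0 J
      _ = _ := by ring
  have hparseval : HasSum (fun k : ℕ => c k + c (-k))
      (∫ t in (0 : ℝ)..1, (∑ n ∈ I, a n * f n (n * t)) ^ 2) := by
    simpa [c, unitFourierCoeff_sum_dilates_zero hf ha] using (isBoundedPeriodic_sum_dilates
      (fun n hn => (hf n hn).toIsBoundedPeriodic) a).hasSum_sq_norm_unitFourierCoeff.nat_add_neg
  refine le_of_tendsto' hparseval.tendsto_sum_nat fun J => ?_
  calc ∑ k ∈ range J, (c k + c (-k)) = ∑ k ∈ Ico 1 J, (c k + c (-k)) := by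
        refine (sum_subset (fun k hk => ?_) fun k hk hk' => ?_).symm
        · simp only [mem_Ico, mem_range] at hk ⊢
          omega
        · obtain rfl : k = 0 := by simp only [mem_Ico, mem_range] at hk hk'; omega
          simp [hc0]
    _ ≤ ∑ k ∈ Ico 1 J, 2 * G k := by
        refine sum_le_sum fun k hk => ?_
        have hk0 : (k : ℤ) ≠ 0 := by rw [mem_Ico] at hk; omega
        have hpos := hcG k hk0
        have hneg := hcG (-k) (neg_ne_zero.mpr hk0)
        simp only [Int.natAbs_neg, Int.natAbs_natCast] at hpos hneg
        linarith
    _ ≤ _ := by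
        rw [← mul_sum]
        linarith [hG J]

end MeanSquare

/-! ### Oscillatory integrals of the damped reciprocal -/

theorem abs_integral_sin_mul_le_of_antitoneOn {φ : ℝ → ℝ} {U : Set ℝ} {a b w : ℝ} (hU : IsOpen U)
    (hφ : ContDiffOn ℝ 1 φ U) (hab : a ≤ b) (habU : Set.Icc a b ⊆ U)
    (hanti : AntitoneOn φ (Set.Icc a b)) (hb : 0 ≤ φ b) (hw : w ≠ 0) :
    |∫ x in a..b, Real.sin (w * x) * φ x| ≤ 2 * φ a / |w| := by
  set V : ℝ → ℝ := fun x => -Real.cos (w * x) / w with hV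
  have hVbound (x : ℝ) : |V x| ≤ |w|⁻¹ := by
    rw [hV, abs_div, abs_neg, div_eq_mul_inv]
    exact mul_le_of_le_one_left (by positivity) (Real.abs_cos_le_one _)
  have hVderiv (x : ℝ) : HasDerivAt V (Real.sin (w * x)) x := by
    refine (((hasDerivAt_id x).const_mul w).cos.neg.div_const w).congr_deriv ?_
    field_simp
    simp
  have hφderiv : ∀ x ∈ Set.uIcc a b, HasDerivAt φ (deriv φ x) x := fun x hx =>
    ((hφ.differentiableOn one_ne_zero).differentiableAt
      (hU.mem_nhds (habU (Set.uIcc_of_le hab ▸ hx)))).hasDerivAt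
  have hdcont : ContinuousOn (deriv φ) (Set.uIcc a b) :=
    (hφ.continuousOn_deriv_of_isOpen hU le_rfl).mono (Set.uIcc_of_le hab ▸ habU)
  have hdV : IntervalIntegrable (fun x => deriv φ x * V x) volume a b :=
    (hdcont.mul (by fun_prop)).intervalIntegrable
  have hdnonpos : ∀ x ∈ Set.Ioo a b, deriv φ x ≤ 0 := fun x hx => by
    rw [← derivWithin_of_mem_nhds (Icc_mem_nhds hx.1 hx.2)]
    exact hanti.derivWithin_nonpos
  have hvariation : |∫ x in a..b, deriv φ x * V x| ≤ (φ a - φ b) * |w|⁻¹ := by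
    calc |∫ x in a..b, deriv φ x * V x| ≤ ∫ x in a..b, |deriv φ x * V x| :=
          intervalIntegral.abs_integral_le_integral_abs hab
      _ ≤ ∫ x in a..b, -deriv φ x * |w|⁻¹ := by
          refine intervalIntegral.integral_mono_on_of_le_Ioo hab hdV.abs
            (hdcont.intervalIntegrable.neg.mul_const _) fun x hx => ?_
          rw [abs_mul, abs_of_nonpos (hdnonpos x hx)]
          exact mul_le_mul_of_nonneg_left (hVbound x) (neg_nonneg.mpr (hdnonpos x hx))
      _ = (φ a - φ b) * |w|⁻¹ := by
          rw [intervalIntegral.integral_mul_const, intervalIntegral.integral_neg,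
            intervalIntegral.integral_eq_sub_of_hasDerivAt hφderiv hdcont.intervalIntegrable,
            neg_sub]
  have ha : 0 ≤ φ a := hb.trans (hanti (Set.left_mem_Icc.2 hab) (Set.right_mem_Icc.2 hab) hab)
  have hboundary {x : ℝ} (hx : 0 ≤ φ x) : |φ x * V x| ≤ φ x * |w|⁻¹ := by
    rw [abs_mul, abs_of_nonneg hx]
    exact mul_le_mul_of_nonneg_left (hVbound x) hx
  simp_rw [mul_comm (Real.sin _)]
  rw [intervalIntegral.integral_mul_deriv_eq_deriv_mul hφderiv (fun x _ => hVderiv x)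
    hdcont.intervalIntegrable ((by fun_prop : Continuous _).intervalIntegrable _ _)]
  calc _ ≤ φ b * |w|⁻¹ + φ a * |w|⁻¹ + (φ a - φ b) * |w|⁻¹ :=
        (abs_sub _ _).trans (add_le_add ((abs_sub _ _).trans
          (add_le_add (hboundary hb) (hboundary ha))) hvariation)
    _ = 2 * φ a / |w| := by ring

theorem antitoneOn_sinc : AntitoneOn Real.sinc (Set.Icc 0 Real.pi) := by
  intro x hx y hy hxy
  rcases hx.1.eq_or_lt with rfl | hx0
  · simpa using Real.sinc_le_one y
  · have hslope := strictConcaveOn_sin_Icc.concaveOn.slope_anti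
      (Set.left_mem_Icc.2 Real.pi_pos.le) ⟨hx, hx0.ne'⟩ ⟨hy, (hx0.trans_le hxy).ne'⟩ hxy
    simpa [Real.sinc_of_ne_zero, hx0.ne', (hx0.trans_le hxy).ne', slope_def_field] using hslope

theorem sinc_nonneg {x : ℝ} (hx : x ∈ Set.Icc 0 Real.pi) : 0 ≤ Real.sinc x := by
  rw [Real.sinc_apply]
  split_ifs
  · exact zero_le_one
  · exact div_nonneg (Real.sin_nonneg_of_mem_Icc hx) hx.1

theorem two_pi_mul_mem_Icc {x : ℝ} (hx : 0 ≤ x) (hx' : x ≤ 1 / 2) :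
    2 * Real.pi * x ∈ Set.Icc 0 Real.pi :=
  ⟨by positivity, by nlinarith [Real.pi_pos]⟩

theorem sr_eq_sinc {t : ℝ} (ht : t ≠ 0) : sr t = Real.sinc (2 * Real.pi * t) := by
  rw [sr, Real.sinc_of_ne_zero (by positivity)]

theorem sr_neg (t : ℝ) : sr (-t) = sr t := by
  simp only [sr, mul_neg, Real.sin_neg, neg_div_neg_eq]

/-- The reciprocal `1 / x` with the damping factor `sr x ^ 2` of the sum. -/
def dampedInv (x : ℝ) : ℝ := sr x ^ 2 / x

theorem dampedInv_eq_sinc (x : ℝ) : dampedInv x = Real.sinc (2 * Real.pi * x) ^ 2 / x := by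
  rcases eq_or_ne x 0 with rfl | hx
  · simp [dampedInv]
  · rw [dampedInv, sr_eq_sinc hx]

theorem dampedInv_neg (x : ℝ) : dampedInv (-x) = -dampedInv x := by
  rw [dampedInv, dampedInv, sr_neg, div_neg]

theorem abs_dampedInv_le (x : ℝ) : |dampedInv x| ≤ |x|⁻¹ := by
  rw [dampedInv_eq_sinc, abs_div, abs_pow, div_eq_mul_inv]
  exact mul_le_of_le_one_left (by positivity) (pow_le_one₀ (abs_nonneg _) (Real.abs_sinc_le_one _))

theorem measurable_dampedInv : Measurable dampedInv := by
  unfold dampedInv sr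
  fun_prop

theorem contDiffOn_dampedInv : ContDiffOn ℝ 1 dampedInv {0}ᶜ := by
  unfold dampedInv sr
  fun_prop (disch := simp_all [Real.pi_ne_zero])

theorem antitoneOn_dampedInv : AntitoneOn dampedInv (Set.Ioc 0 (1 / 2)) := by
  intro x hx y hy hxy
  rw [dampedInv_eq_sinc, dampedInv_eq_sinc]
  have hx' := two_pi_mul_mem_Icc hx.1.le hx.2
  have hy' := two_pi_mul_mem_Icc hy.1.le hy.2
  have hx0 : 0 < x := hx.1
  gcongr
  · exact sinc_nonneg hy'
  · exact antitoneOn_sinc hx' hy' (by gcongr)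

theorem abs_integral_sin_mul_dampedInv_le {a w : ℝ} (ha : 0 < a) (ha' : a ≤ 1 / 2) (hw : w ≠ 0) :
    |∫ x in a..(1 / 2), Real.sin (w * x) * dampedInv x| ≤ 2 / (|w| * a) := by
  have hIcc : Set.Icc a (1 / 2) ⊆ Set.Ioc 0 (1 / 2) := fun x hx => ⟨ha.trans_le hx.1, hx.2⟩
  calc _ ≤ 2 * dampedInv a / |w| :=
        abs_integral_sin_mul_le_of_antitoneOn isOpen_compl_singleton contDiffOn_dampedInv ha'
          (fun x hx => (hIcc hx).1.ne') (antitoneOn_dampedInv.mono hIcc)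
          (by unfold dampedInv; positivity) hw
    _ ≤ 2 * a⁻¹ / |w| := by
        gcongr
        exact (le_abs_self _).trans ((abs_dampedInv_le a).trans_eq (by rw [abs_of_pos ha]))
    _ = 2 / (|w| * a) := by field_simp

theorem abs_integral_sin_mul_dampedInv_le_mul {a b : ℝ} (ha : 0 ≤ a) (hab : a ≤ b) (w : ℝ) :
    |∫ x in a..b, Real.sin (w * x) * dampedInv x| ≤ |w| * b := by
  have hbound : ∀ x ∈ Set.uIoc a b, ‖Real.sin (w * x) * dampedInv x‖ ≤ |w| := by
    intro x hx
    rw [Set.uIoc_of_le hab] at hx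
    have hx0 : 0 < x := ha.trans_lt hx.1
    calc ‖Real.sin (w * x) * dampedInv x‖ ≤ |w * x| * |x|⁻¹ := by
          rw [norm_mul]
          exact mul_le_mul Real.abs_sin_le_abs (abs_dampedInv_le x) (abs_nonneg _) (abs_nonneg _)
      _ = |w| := by rw [abs_mul, mul_inv_cancel_right₀ (abs_pos.mpr hx0.ne').ne']
  have hintegral := intervalIntegral.norm_integral_le_of_norm_le_const hbound
  rw [abs_of_nonneg (sub_nonneg.mpr hab)] at hintegral
  exact hintegral.trans (by gcongr; linarith)

theorem intervalIntegrable_sin_mul_dampedInv {a b : ℝ} (ha : 0 < a) (hb : 0 < b) (w : ℝ) :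
    IntervalIntegrable (fun x => Real.sin (w * x) * dampedInv x) volume a b := by
  refine ContinuousOn.intervalIntegrable ?_
  refine ContinuousOn.mul (by fun_prop) (contDiffOn_dampedInv.continuousOn.mono fun x hx => ?_)
  exact ((lt_min ha hb).trans_le hx.1).ne'

theorem abs_integral_sin_mul_dampedInv_le_min {X : ℝ} (hX : 2 ≤ X) {k : ℤ} (hk : k ≠ 0) :
    |∫ x in X⁻¹..(1 / 2), Real.sin (2 * Real.pi * k * x) * dampedInv x| ≤
      4 * min 1 (X / |(k : ℝ)|) := by
  have hpi := Real.pi_gt_three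
  have hpi' := Real.pi_lt_d2
  have hk1 : 1 ≤ |(k : ℝ)| := by exact_mod_cast Int.one_le_abs hk
  have hw : |2 * Real.pi * k| = 2 * Real.pi * |(k : ℝ)| := by
    rw [abs_mul, abs_of_pos (by positivity)]
  have hw0 : 2 * Real.pi * k ≠ 0 := by positivity
  have hX' : X⁻¹ ≤ 1 / 2 := by rw [one_div]; gcongr
  rcases le_total X (2 * |(k : ℝ)|) with hXk | hXk
  · calc _ ≤ 2 / (|2 * Real.pi * k| * X⁻¹) :=
          abs_integral_sin_mul_dampedInv_le (by positivity) hX' hw0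
      _ = Real.pi⁻¹ * (X / |(k : ℝ)|) := by rw [hw]; field_simp
      _ ≤ 2⁻¹ * (2 * min 1 (X / |(k : ℝ)|)) := by
          have hle : X / |(k : ℝ)| ≤ 2 := (div_le_iff₀ (by positivity)).mpr hXk
          have hXk0 : 0 ≤ X / |(k : ℝ)| := by positivity
          gcongr
          · linarith
          · rw [mul_min_of_nonneg _ _ zero_le_two]
            exact le_min (by linarith) (by linarith)
      _ ≤ 4 * min 1 (X / |(k : ℝ)|) := by
          have hmin : 0 ≤ min 1 (X / |(k : ℝ)|) := by positivity
          linarith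
  · set b := (2 * |(k : ℝ)|)⁻¹ with hb
    have hb0 : 0 < b := by positivity
    have hXb : X⁻¹ ≤ b := by rw [hb]; gcongr
    have hb' : b ≤ 1 / 2 := by rw [hb, one_div]; gcongr; linarith
    rw [min_eq_left ((one_le_div (by positivity)).mpr (by linarith)),
      ← intervalIntegral.integral_add_adjacent_intervals
        (intervalIntegrable_sin_mul_dampedInv (by positivity) hb0 _)
        (intervalIntegrable_sin_mul_dampedInv hb0 (by norm_num) _)]
    calc _ ≤ |2 * Real.pi * k| * b + 2 / (|2 * Real.pi * k| * b) :=
          (abs_add_le _ _).trans (add_le_add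
            (abs_integral_sin_mul_dampedInv_le_mul (by positivity) hXb _)
            (abs_integral_sin_mul_dampedInv_le hb0 hb' hw0))
      _ = Real.pi + 2 / Real.pi := by rw [hw, hb]; field_simp
      _ ≤ 4 * 1 := by
          have hle : 2 / Real.pi ≤ 2 / 3 := by gcongr
          linarith

/-! ### Kernels depending on the distance to the nearest integer -/

theorem nid_nonneg (t : ℝ) : 0 ≤ nid t := abs_nonneg _

theorem nid_le_half (t : ℝ) : nid t ≤ 1 / 2 := abs_sub_round t

/-- The representative of `t` modulo one nearest to zero. -/
def centeredFract (t : ℝ) : ℝ := t - round t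

theorem abs_centeredFract (t : ℝ) : |centeredFract t| = nid t := rfl

theorem periodic_centeredFract : Function.Periodic centeredFract 1 := fun t => by
  simp only [centeredFract, round_add_one, Int.cast_add, Int.cast_one, add_sub_add_right_eq_sub]

theorem periodic_nid : Function.Periodic nid 1 := fun t => by
  rw [← abs_centeredFract, periodic_centeredFract, abs_centeredFract]

theorem measurable_centeredFract : Measurable centeredFract := by
  simp only [funext fun t : ℝ => show centeredFract t = t - ⌊t + 1 / 2⌋ by
    rw [centeredFract, round_eq]]
  fun_prop

theorem measurable_nid : Measurable nid := measurable_centeredFract.norm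

theorem centeredFract_eq_self {x : ℝ} (hx : x ∈ Set.Ico (-(1 / 2) : ℝ) (1 / 2)) :
    centeredFract x = x := by
  rw [centeredFract, round_eq_zero_iff.mpr hx, Int.cast_zero, sub_zero]

theorem centeredFract_neg_of_mem_Ioo {x : ℝ} (hx : x ∈ Set.Ioo (0 : ℝ) (1 / 2)) :
    centeredFract (-x) = -centeredFract x := by
  rw [centeredFract_eq_self ⟨by linarith [hx.2], by linarith [hx.1]⟩,
    centeredFract_eq_self ⟨by linarith [hx.1], hx.2⟩]

theorem nid_eq_self {x : ℝ} (hx : x ∈ Set.Ioo (0 : ℝ) (1 / 2)) : nid x = x := by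
  rw [← abs_centeredFract, centeredFract_eq_self ⟨by linarith [hx.1], hx.2⟩, abs_of_pos hx.1]

theorem nid_neg_of_mem_Ioo {x : ℝ} (hx : x ∈ Set.Ioo (0 : ℝ) (1 / 2)) : nid (-x) = nid x := by
  rw [← abs_centeredFract, centeredFract_neg_of_mem_Ioo hx, abs_neg, abs_centeredFract]

namespace IsBoundedPeriodic

variable {f : ℝ → ℝ}

theorem unitFourierCoeff_eq_integral_half (hf : IsBoundedPeriodic f) (k : ℤ) :
    unitFourierCoeff f k = ∫ x in (0 : ℝ)..(1 / 2),
      (Complex.exp (-(2 * Real.pi * Complex.I * k * x)) * f x +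
        Complex.exp (2 * Real.pi * Complex.I * k * x) * f (-x)) := by
  set G := fun x : ℝ => Complex.exp (-(2 * Real.pi * Complex.I * k * x)) * (f x : ℂ) with hG
  have hint (a b : ℝ) : IntervalIntegrable G volume a b := hf.intervalIntegrable_exp_mul k a b
  have hneg : IntervalIntegrable (fun x => G (-x)) volume 0 (1 / 2) := by
    simpa using (IntervalIntegrable.iff_comp_neg (by simp)).mp (hint 0 (-(1 / 2)))
  calc unitFourierCoeff f k = ∫ x in (-(1 / 2) : ℝ)..(1 / 2), G x := by
        rw [unitFourierCoeff_eq_integral]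
        convert (periodic_exp_mul hf.periodic k).intervalIntegral_add_eq 0 (-(1 / 2)) using 2 <;>
          norm_num
    _ = (∫ x in (0 : ℝ)..(1 / 2), G x) + ∫ x in (0 : ℝ)..(1 / 2), G (-x) := by
        rw [intervalIntegral.integral_comp_neg, neg_zero, add_comm,
          intervalIntegral.integral_add_adjacent_intervals (hint _ 0) (hint 0 _)]
    _ = _ := by
        rw [← intervalIntegral.integral_add (hint _ _) hneg]
        simp only [hG, Complex.ofReal_neg, mul_neg, neg_neg]

theorem norm_unitFourierCoeff_of_odd (hf : IsBoundedPeriodic f)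
    (hodd : ∀ x ∈ Set.Ioo (0 : ℝ) (1 / 2), f (-x) = -f x) (k : ℤ) :
    ‖unitFourierCoeff f k‖ =
      2 * |∫ x in (0 : ℝ)..(1 / 2), Real.sin (2 * Real.pi * k * x) * f x| := by
  have hcoeff : unitFourierCoeff f k = -2 * Complex.I *
      ((∫ x in (0 : ℝ)..(1 / 2), Real.sin (2 * Real.pi * k * x) * f x : ℝ) : ℂ) := by
    rw [hf.unitFourierCoeff_eq_integral_half, ← intervalIntegral.integral_ofReal,
      ← intervalIntegral.integral_const_mul]
    refine intervalIntegral.integral_congr_Ioo_of_le (by norm_num) fun x hx => ?_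
    simp only [hodd x hx]
    push_cast
    rw [Complex.sin]
    ring_nf
    simp only [Complex.I_sq]
    ring
  simp [hcoeff]

theorem unitFourierCoeff_of_even (hf : IsBoundedPeriodic f)
    (heven : ∀ x ∈ Set.Ioo (0 : ℝ) (1 / 2), f (-x) = f x) (k : ℤ) :
    unitFourierCoeff f k =
      ((2 * ∫ x in (0 : ℝ)..(1 / 2), Real.cos (2 * Real.pi * k * x) * f x : ℝ) : ℂ) := by
  rw [hf.unitFourierCoeff_eq_integral_half, Complex.ofReal_mul,
    ← intervalIntegral.integral_ofReal, ← intervalIntegral.integral_const_mul]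
  refine intervalIntegral.integral_congr_Ioo_of_le (by norm_num) fun x hx => ?_
  simp only [heven x hx]
  push_cast
  rw [Complex.cos]
  ring_nf

end IsBoundedPeriodic

theorem unitFourierCoeff_const {k : ℤ} (hk : k ≠ 0) (c : ℝ) :
    unitFourierCoeff (fun _ => c) k = 0 := by
  refine unitFourierCoeff_eq_zero_of_periodic (fun _ => rfl) (a := (2 * k)⁻¹) (fun _ => rfl)
    fun m hm => ?_
  have hk' : (k : ℝ) ≠ 0 := by exact_mod_cast hk
  have hm' : (2 * m : ℝ) = 1 := by rw [← hm]; field_simp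
  norm_cast at hm'
  omega

theorem IsBoundedPeriodic.unitFourierCoeff_sub_const {f : ℝ → ℝ} (hf : IsBoundedPeriodic f)
    (c : ℝ) (k : ℤ) :
    unitFourierCoeff (fun t => f t - c) k = unitFourierCoeff f k - unitFourierCoeff (fun _ => c) k
    := by
  have hc : IsBoundedPeriodic fun _ => c := ⟨measurable_const, fun _ => rfl, |c|, fun _ => le_rfl⟩
  simp_rw [unitFourierCoeff_eq_integral]
  rw [← intervalIntegral.integral_sub (hf.intervalIntegrable_exp_mul k 0 1)
    (hc.intervalIntegrable_exp_mul k 0 1)]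
  simp_rw [Complex.ofReal_sub, mul_sub]

theorem IsBoundedPeriodic.hasFourierDecay_sub_integral {f : ℝ → ℝ} {X A : ℝ}
    (hf : IsBoundedPeriodic f)
    (hcoeff : ∀ k : ℤ, k ≠ 0 → ‖unitFourierCoeff f k‖ ≤ A * min 1 (X / |(k : ℝ)|)) :
    HasFourierDecay (fun t => f t - ∫ x in (0 : ℝ)..1, f x) X A where
  toIsBoundedPeriodic := hf.sub_const _
  coeff_zero := by simp [hf.unitFourierCoeff_sub_const, unitFourierCoeff_zero]
  norm_coeff_le k hk := by
    simpa [hf.unitFourierCoeff_sub_const, unitFourierCoeff_const hk] using hcoeff k hk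

theorem hasFourierDecay_zero {X A : ℝ} (hX : 0 ≤ X) (hA : 0 ≤ A) :
    HasFourierDecay (fun _ => 0) X A where
  measurable := measurable_const
  periodic _ := rfl
  exists_bound := ⟨0, by simp⟩
  coeff_zero := by simp [unitFourierCoeff_zero]
  norm_coeff_le k hk := by
    rw [unitFourierCoeff_const hk, norm_zero]
    positivity

theorem integral_eq_integral_of_eqOn_indicator {f g : ℝ → ℝ} {a b u v : ℝ} (hu : u ≤ a)
    (hab : a ≤ b) (hv : b ≤ v) (hf : ∀ x ∈ Set.Ioo u v, f x = (Set.Ioc a b).indicator g x) :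
    ∫ x in u..v, f x = ∫ x in a..b, g x := by
  rw [intervalIntegral.integral_congr_Ioo_of_le (hu.trans (hab.trans hv)) hf,
    intervalIntegral.integral_of_le (hu.trans (hab.trans hv)), setIntegral_indicator
    measurableSet_Ioc, Set.inter_eq_right.mpr (Set.Ioc_subset_Ioc hu hv),
    intervalIntegral.integral_of_le hab]

theorem one_lt_mul_nid_iff {X x : ℝ} (hX : 0 < X) (hx : x ∈ Set.Ioo (0 : ℝ) (1 / 2)) :
    1 < X * nid x ↔ X⁻¹ < x := by
  rw [nid_eq_self hx, inv_lt_iff_one_lt_mul₀' hX]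

theorem not_one_lt_mul_nid {X : ℝ} (hX : 0 ≤ X) (hX2 : X ≤ 2) (t : ℝ) : ¬1 < X * nid t := by
  nlinarith [nid_le_half t]

/-- The function `1 / nid` cut off where `nid t ≤ 1 / X`. -/
def truncRecip (X t : ℝ) : ℝ := if 1 < X * nid t then (nid t)⁻¹ else 0

/-- The damped reciprocal of the signed distance to the nearest integer, cut off where
`nid t ≤ 1 / X`. -/
def truncKernel (X t : ℝ) : ℝ := if 1 < X * nid t then dampedInv (centeredFract t) else 0

/-- The indicator of `1 / X < nid t ≤ κ / X` times `X`; it bounds the change of `truncKernel`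
when the threshold moves by a factor `κ`. -/
def truncWindow (X κ t : ℝ) : ℝ := if 1 < X * nid t ∧ X * nid t ≤ κ then X else 0

section Trunc

variable {X κ : ℝ}

theorem measurableSet_one_lt_mul_nid (X : ℝ) : MeasurableSet {t | 1 < X * nid t} :=
  measurableSet_lt measurable_const (measurable_nid.const_mul X)

theorem truncRecip_nonneg (X t : ℝ) : 0 ≤ truncRecip X t := by
  unfold truncRecip
  split_ifs
  exacts [inv_nonneg.mpr (nid_nonneg t), le_rfl]

theorem truncRecip_le (hX : 0 ≤ X) (t : ℝ) : truncRecip X t ≤ X := by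
  unfold truncRecip
  split_ifs with h
  · rw [inv_le_iff_one_le_mul₀ (pos_of_mul_pos_right (zero_lt_one.trans h) hX)]
    exact h.le
  · exact hX

theorem measurable_truncRecip (X : ℝ) : Measurable (truncRecip X) :=
  .ite (measurableSet_one_lt_mul_nid X) measurable_nid.inv measurable_const

theorem periodic_truncRecip (X : ℝ) : Function.Periodic (truncRecip X) 1 := fun t => by
  simp only [truncRecip, periodic_nid t]

theorem isBoundedPeriodic_truncRecip (hX : 0 ≤ X) : IsBoundedPeriodic (truncRecip X) where
  measurable := measurable_truncRecip X
  periodic := periodic_truncRecip X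
  exists_bound := ⟨X, fun t => by
    rw [abs_of_nonneg (truncRecip_nonneg X t)]
    exact truncRecip_le hX t⟩

theorem abs_truncKernel_le (X t : ℝ) : |truncKernel X t| ≤ truncRecip X t := by
  unfold truncKernel truncRecip
  split_ifs
  · exact abs_dampedInv_le _
  · rw [abs_zero]

theorem measurable_truncKernel (X : ℝ) : Measurable (truncKernel X) :=
  .ite (measurableSet_one_lt_mul_nid X) (measurable_dampedInv.comp measurable_centeredFract)
    measurable_const

theorem isBoundedPeriodic_truncKernel (hX : 0 ≤ X) : IsBoundedPeriodic (truncKernel X) where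
  measurable := measurable_truncKernel X
  periodic t := by simp only [truncKernel, periodic_nid t, periodic_centeredFract t]
  exists_bound := ⟨X, fun t => (abs_truncKernel_le X t).trans (truncRecip_le hX t)⟩

theorem norm_unitFourierCoeff_truncKernel (hX : 2 ≤ X) (k : ℤ) :
    ‖unitFourierCoeff (truncKernel X) k‖ =
      2 * |∫ x in X⁻¹..(1 / 2), Real.sin (2 * Real.pi * k * x) * dampedInv x| := by
  have hX0 : 0 < X := by linarith
  have hX' : X⁻¹ ≤ 1 / 2 := by rw [one_div]; gcongr
  rw [(isBoundedPeriodic_truncKernel hX0.le).norm_unitFourierCoeff_of_odd]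
  · congr 2
    refine integral_eq_integral_of_eqOn_indicator (by positivity) hX' le_rfl fun x hx => ?_
    simp only [truncKernel, one_lt_mul_nid_iff hX0 hx, Set.indicator, Set.mem_Ioc, hx.2.le,
      and_true, centeredFract_eq_self ⟨by linarith [hx.1], hx.2⟩, mul_ite, mul_zero]
  · intro x hx
    simp only [truncKernel, nid_neg_of_mem_Ioo hx, centeredFract_neg_of_mem_Ioo hx, dampedInv_neg]
    split_ifs <;> simp

theorem hasFourierDecay_truncKernel (hX : 0 ≤ X) : HasFourierDecay (truncKernel X) X 8 := by
  rcases le_total X 2 with hX2 | hX2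
  · have hzero : truncKernel X = fun _ => 0 := funext fun t => if_neg (not_one_lt_mul_nid hX hX2 t)
    exact hzero ▸ hasFourierDecay_zero hX (by norm_num)
  · refine ⟨isBoundedPeriodic_truncKernel hX, ?_, fun k hk => ?_⟩
    · rw [← norm_eq_zero, norm_unitFourierCoeff_truncKernel hX2]
      simp
    · rw [norm_unitFourierCoeff_truncKernel hX2]
      linarith [abs_integral_sin_mul_dampedInv_le_min hX2 hk]

theorem truncWindow_nonneg (hX : 0 ≤ X) (κ t : ℝ) : 0 ≤ truncWindow X κ t := by
  unfold truncWindow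
  split_ifs
  exacts [hX, le_rfl]

theorem isBoundedPeriodic_truncWindow (hX : 0 ≤ X) (κ : ℝ) :
    IsBoundedPeriodic (truncWindow X κ) where
  measurable := .ite ((measurableSet_one_lt_mul_nid X).inter
    (measurableSet_le (measurable_nid.const_mul X) measurable_const))
    measurable_const measurable_const
  periodic t := by simp only [truncWindow, periodic_nid t]
  exists_bound := ⟨X, fun t => by
    unfold truncWindow
    split_ifs
    exacts [(abs_of_nonneg hX).le, by rwa [abs_zero]]⟩

theorem abs_truncKernel_sub_le {X' : ℝ} (hX : 0 ≤ X) (hκ0 : 0 ≤ κ) (hX' : X' ≤ X)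
    (hκ : X ≤ κ * X') (t : ℝ) :
    |truncKernel X t - truncKernel X' t| ≤ truncWindow X κ t := by
  have hmono : X' * nid t ≤ X * nid t := mul_le_mul_of_nonneg_right hX' (nid_nonneg t)
  by_cases h' : 1 < X' * nid t
  · rw [truncKernel, truncKernel, if_pos h', if_pos (h'.trans_le hmono), sub_self, abs_zero]
    exact truncWindow_nonneg hX κ t
  by_cases h : 1 < X * nid t
  · have hκt : X * nid t ≤ κ := by
      have hκ0 : 0 ≤ κ := by
        by_contra! hneg
        nlinarith [mul_le_mul_of_nonneg_right hκ (nid_nonneg t), nid_nonneg t]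
      nlinarith [hκ0, mul_le_mul_of_nonneg_right hκ (nid_nonneg t)]
    rw [truncWindow, if_pos ⟨h, hκt⟩, show truncKernel X' t = 0 from if_neg h', sub_zero]
    exact (abs_truncKernel_le X t).trans (truncRecip_le hX t)
  · rw [truncKernel, truncKernel, if_neg h', if_neg h, sub_self, abs_zero]
    exact truncWindow_nonneg hX κ t

theorem truncWindow_eq_zero (hX : 0 ≤ X) (hX2 : X ≤ 2) (κ t : ℝ) : truncWindow X κ t = 0 :=
  if_neg fun h => not_one_lt_mul_nid hX hX2 t h.1

theorem inv_le_min_div_half (hX : 2 ≤ X) (hκ : 1 ≤ κ) : X⁻¹ ≤ min (κ / X) (1 / 2) := by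
  refine le_min ?_ ?_
  · rw [← one_div]; gcongr
  · rw [one_div]; gcongr

theorem unitFourierCoeff_truncWindow (hX : 2 ≤ X) (hκ : 1 ≤ κ) (k : ℤ) :
    unitFourierCoeff (truncWindow X κ) k =
      ((2 * X * ∫ x in X⁻¹..min (κ / X) (1 / 2), Real.cos (2 * Real.pi * k * x) : ℝ) : ℂ) := by
  have hX0 : 0 < X := by linarith
  have hle := inv_le_min_div_half hX hκ
  rw [(isBoundedPeriodic_truncWindow hX0.le κ).unitFourierCoeff_of_even,
    integral_eq_integral_of_eqOn_indicator (by positivity) hle (min_le_right _ _)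
      (g := fun x => Real.cos (2 * Real.pi * k * x) * X),
    intervalIntegral.integral_mul_const]
  · congr 1
    ring
  · intro x hx
    have hκx : X * nid x ≤ κ ↔ x ≤ κ / X := by rw [nid_eq_self hx, le_div_iff₀' hX0]
    simp only [truncWindow, one_lt_mul_nid_iff hX0 hx, hκx, Set.indicator, Set.mem_Ioc,
      le_min_iff, hx.2.le, and_true, mul_ite, mul_zero]
  · intro x hx
    simp only [truncWindow, nid_neg_of_mem_Ioo hx]

theorem norm_unitFourierCoeff_truncWindow_le (hX : 0 ≤ X) (hκ : 1 ≤ κ) (k : ℤ) :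
    ‖unitFourierCoeff (truncWindow X κ) k‖ ≤ 2 * (κ - 1) := by
  rcases le_total X 2 with hX2 | hX2
  · simpa [unitFourierCoeff_eq_integral, truncWindow_eq_zero hX hX2] using hκ
  have hle := inv_le_min_div_half hX2 hκ
  have hint := intervalIntegral.norm_integral_le_of_norm_le_const (a := X⁻¹)
    (b := min (κ / X) (1 / 2)) (f := fun x => Real.cos (2 * Real.pi * k * x))
    fun x _ => Real.abs_cos_le_one _
  rw [one_mul, abs_of_nonneg (sub_nonneg.mpr hle)] at hint
  rw [unitFourierCoeff_truncWindow hX2 hκ, Complex.norm_real, norm_mul,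
    Real.norm_of_nonneg (by positivity)]
  calc _ ≤ 2 * X * (κ / X - X⁻¹) := by
        gcongr
        exact hint.trans (sub_le_sub_right (min_le_left _ _) _)
    _ = 2 * (κ - 1) := by
        have : X ≠ 0 := by positivity
        field_simp

theorem norm_unitFourierCoeff_truncWindow_le_div (hX : 0 ≤ X) (hκ : 1 ≤ κ) {k : ℤ} (hk : k ≠ 0) :
    ‖unitFourierCoeff (truncWindow X κ) k‖ ≤ X / |(k : ℝ)| := by
  rcases le_total X 2 with hX2 | hX2
  · simp only [unitFourierCoeff_eq_integral, truncWindow_eq_zero hX hX2]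
    simpa using by positivity
  have hpi := Real.pi_gt_three
  have hsin (u v : ℝ) : |Real.sin u - Real.sin v| ≤ 2 := by
    linarith [abs_sub (Real.sin u) (Real.sin v), Real.abs_sin_le_one u, Real.abs_sin_le_one v]
  rw [unitFourierCoeff_truncWindow hX2 hκ, Complex.norm_real, norm_mul,
    Real.norm_of_nonneg (by positivity),
    intervalIntegral.integral_comp_mul_left (fun x => Real.cos x) (by positivity), integral_cos,
    norm_smul, norm_inv, norm_mul, Real.norm_of_nonneg (by positivity)]
  simp only [Real.norm_eq_abs]
  calc _ ≤ 2 * X * ((2 * Real.pi * |(k : ℝ)|)⁻¹ * 2) := by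
        gcongr
        exact hsin _ _
    _ = 2 / Real.pi * (X / |(k : ℝ)|) := by field_simp
    _ ≤ 1 * (X / |(k : ℝ)|) := by
        gcongr
        rw [div_le_one (by linarith)]
        linarith
    _ = X / |(k : ℝ)| := one_mul _

theorem integral_truncWindow_le (hX : 0 ≤ X) (hκ : 1 ≤ κ) :
    ∫ t in (0 : ℝ)..1, truncWindow X κ t ≤ 2 * (κ - 1) := by
  have hnorm := norm_unitFourierCoeff_truncWindow_le hX hκ 0
  rw [unitFourierCoeff_zero, Complex.norm_real] at hnorm
  exact (Real.le_norm_self _).trans hnorm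

theorem hasFourierDecay_truncWindow_sub_integral {A : ℝ} (hX : 0 ≤ X) (hκ : 1 ≤ κ) (hA : 1 ≤ A)
    (hκA : 2 * (κ - 1) ≤ A) :
    HasFourierDecay (fun t => truncWindow X κ t - ∫ x in (0 : ℝ)..1, truncWindow X κ x) X A := by
  refine (isBoundedPeriodic_truncWindow hX κ).hasFourierDecay_sub_integral fun k hk => ?_
  rw [mul_min_of_nonneg _ _ (by linarith), mul_one]
  refine le_min ((norm_unitFourierCoeff_truncWindow_le hX hκ k).trans hκA) ?_
  exact (norm_unitFourierCoeff_truncWindow_le_div hX hκ hk).trans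
    (le_mul_of_one_le_left (by positivity) hA)

end Trunc

/-! ### Maximal inequalities -/

theorem add_sq_le_weighted (x y : ℝ) {c : ℝ} (hc : 0 < c) :
    (x + y) ^ 2 ≤ (1 + c) * x ^ 2 + (1 + c⁻¹) * y ^ 2 := by
  have hdiff : (1 + c) * x ^ 2 + (1 + c⁻¹) * y ^ 2 - (x + y) ^ 2 = (c * x - y) ^ 2 * c⁻¹ := by
    field_simp
    ring
  exact sub_nonneg.mp (hdiff ▸ by positivity)

theorem sq_sum_Ico_le_of_halves {y : ℕ → ℝ} {a m b : ℕ} {q₁ q₂ c : ℝ} (hc : 0 < c) (ham : a ≤ m)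
    (h₁ : ∀ b ≤ m, (∑ i ∈ Ico a b, y i) ^ 2 ≤ q₁) (hb : (∑ i ∈ Ico m b, y i) ^ 2 ≤ q₂) :
    (∑ i ∈ Ico a b, y i) ^ 2 ≤ (1 + c) * (q₁ + q₂) + (1 + c⁻¹) * (∑ i ∈ Ico a m, y i) ^ 2 := by
  have hq₁ : 0 ≤ q₁ := (sq_nonneg _).trans (h₁ m le_rfl)
  have hq₂ : 0 ≤ q₂ := (sq_nonneg _).trans hb
  rcases le_total b m with hbm | hmb
  · calc (∑ i ∈ Ico a b, y i) ^ 2 ≤ 1 * (q₁ + 0) + 0 := by linarith [h₁ b hbm]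
      _ ≤ _ := by gcongr <;> first | positivity | linarith
  · rw [← sum_Ico_consecutive _ ham hmb, add_comm]
    refine (add_sq_le_weighted _ _ hc).trans ?_
    gcongr
    linarith

/-- The Rademacher–Menshov inequality, for sums that are orthogonal up to the bound `v`. -/
theorem exists_integrable_forall_sq_sum_Ico_le {Ω : Type*} [MeasurableSpace Ω] {μ : Measure Ω}
    {Y : ℕ → Ω → ℝ} {v : ℕ → ℝ}
    (hY : ∀ a b, Integrable (fun t => (∑ i ∈ Ico a b, Y i t) ^ 2) μ)
    (hv : ∀ a b, ∫ t, (∑ i ∈ Ico a b, Y i t) ^ 2 ∂μ ≤ ∑ i ∈ Ico a b, v i) (K a : ℕ) :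
    ∃ Q : Ω → ℝ, Integrable Q μ ∧ (∀ b ≤ a + 2 ^ K, ∀ t, (∑ i ∈ Ico a b, Y i t) ^ 2 ≤ Q t) ∧
      ∫ t, Q t ∂μ ≤ (K + 1) ^ 2 * ∑ i ∈ Ico a (a + 2 ^ K), v i := by
  induction K generalizing a with
  | zero =>
    refine ⟨fun t => (∑ i ∈ Ico a (a + 1), Y i t) ^ 2, hY a _, fun b hb t => ?_, ?_⟩
    · rcases hb.eq_or_lt with rfl | hb
      · exact le_rfl
      · rw [Ico_eq_empty_of_le (by omega), sum_empty, zero_pow two_ne_zero]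
        positivity
    · simpa using hv a (a + 1)
  | succ K ih =>
    set m := a + 2 ^ K
    have ham : a ≤ m := Nat.le_add_right _ _
    obtain ⟨Q₁, hQ₁, hmax₁, hint₁⟩ := ih a
    obtain ⟨Q₂, hQ₂, hmax₂, hint₂⟩ := ih m
    have hend : a + 2 ^ (K + 1) = m + 2 ^ K := by simp only [m, pow_succ]; omega
    have hQ : Integrable (fun t => Q₁ t + Q₂ t) μ := hQ₁.add hQ₂
    set c : ℝ := ((K : ℝ) + 1)⁻¹
    have hc : 0 < c := by positivity
    rw [hend]
    refine ⟨fun t => (1 + c) * (Q₁ t + Q₂ t) + (1 + c⁻¹) * (∑ i ∈ Ico a m, Y i t) ^ 2,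
      (hQ.const_mul _).add ((hY a m).const_mul _), fun b hb t =>
        sq_sum_Ico_le_of_halves hc ham (fun b hb => hmax₁ b hb t) (hmax₂ b hb t), ?_⟩
    have hfirst := hv a m
    have hsecond : 0 ≤ ∑ i ∈ Ico m (m + 2 ^ K), v i :=
      (integral_nonneg fun t => sq_nonneg _).trans (hv m (m + 2 ^ K))
    rw [integral_add (hQ.const_mul _) ((hY a m).const_mul _), integral_const_mul,
      integral_const_mul, integral_add hQ₁ hQ₂, ← sum_Ico_consecutive v ham (Nat.le_add_right _ _)]
    set S₁ := ∑ i ∈ Ico a m, v i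
    set S₂ := ∑ i ∈ Ico m (m + 2 ^ K), v i
    calc _ ≤ (1 + c) * (((K : ℝ) + 1) ^ 2 * S₁ + ((K : ℝ) + 1) ^ 2 * S₂) + (1 + c⁻¹) * S₁ := by
          gcongr
      _ = ((K : ℝ) + 1 + 1) ^ 2 * S₁ + ((K : ℝ) + 1) * (K + 2) * S₂ := by
          simp only [c]
          field_simp
          ring
      _ ≤ (((K + 1 : ℕ) : ℝ) + 1) ^ 2 * (S₁ + S₂) := by
          push_cast
          nlinarith [mul_nonneg (Nat.cast_nonneg (α := ℝ) K) hsecond]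

theorem exists_integrable_forall_sq_sum_dilates_le {f : ℕ → ℝ → ℝ} {a X : ℕ → ℝ} {A : ℝ}
    (hf : ∀ n, HasFourierDecay (f n) (X n) A) (hX : ∀ n, 0 ≤ X n) (ha : a 0 = 0) (K : ℕ) :
    ∃ Q : ℝ → ℝ, Integrable Q (volume.restrict (Set.Ioc 0 1)) ∧
      (∀ M ≤ 2 ^ K, ∀ t : ℝ, (∑ n ∈ range M, a n * f n (n * t)) ^ 2 ≤ Q t) ∧
      ∫ t in Set.Ioc 0 1, Q t ≤ (K + 1) ^ 2 * (14 * A ^ 2 *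
        ∑ n ∈ range (2 ^ K), a n ^ 2 * (#n.divisors * (X n * (1 + Real.posLog (X n))))) := by
  have hint (u v : ℕ) : Integrable (fun t => (∑ n ∈ Ico u v, a n * f n (n * t)) ^ 2)
      (volume.restrict (Set.Ioc 0 1)) :=
    ((isBoundedPeriodic_sum_dilates (fun n _ => (hf n).toIsBoundedPeriodic) a).sq.intervalIntegrable
      0 1).1
  obtain ⟨Q, hQ, hmax, hQint⟩ := exists_integrable_forall_sq_sum_Ico_le hint
    (v := fun n => 14 * A ^ 2 * (a n ^ 2 * (#n.divisors * (X n * (1 + Real.posLog (X n))))))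
    (fun u v => by
      rw [← intervalIntegral.integral_of_le zero_le_one, ← mul_sum]
      exact integral_sq_sum_dilates_le (fun n _ => hf n) (fun n _ => hX n) ha) K 0
  simp only [zero_add, Nat.Ico_zero_eq_range, ← mul_sum] at hmax hQint
  exact ⟨Q, hQ, hmax, hQint⟩

theorem ae_exists_forall_le_of_summable_integral {Ω : Type*} [MeasurableSpace Ω] {μ : Measure Ω}
    {Q : ℕ → Ω → ℝ} (hQ : ∀ j, Integrable (Q j) μ) (hQ0 : ∀ j t, 0 ≤ Q j t)
    (hsum : Summable fun j => ∫ t, Q j t ∂μ) : ∀ᵐ t ∂μ, ∃ C : ℝ, 0 ≤ C ∧ ∀ j, Q j t ≤ C := by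
  have hmeas (j : ℕ) : AEMeasurable (fun t => ENNReal.ofReal (Q j t)) μ :=
    (hQ j).aemeasurable.ennreal_ofReal
  have hfinite : ∫⁻ t, ∑' j, ENNReal.ofReal (Q j t) ∂μ ≠ ⊤ := by
    rw [lintegral_tsum hmeas]
    simp_rw [← fun j => ofReal_integral_eq_lintegral_ofReal (hQ j) (.of_forall (hQ0 j))]
    exact hsum.tsum_ofReal_ne_top
  filter_upwards [ae_lt_top' (AEMeasurable.tsum hmeas) hfinite] with t ht
  refine ⟨(∑' j, ENNReal.ofReal (Q j t)).toReal, ENNReal.toReal_nonneg, fun j => ?_⟩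
  rw [← ENNReal.ofReal_le_iff_le_toReal ht.ne]
  exact ENNReal.le_tsum j

theorem abs_sum_range_mul_le_of_antitoneOn {f y : ℕ → ℝ} {n : ℕ} {A : ℝ}
    (hf : AntitoneOn f (Set.Iic n)) (hf0 : 0 ≤ f n)
    (hy : ∀ M ≤ n, |∑ i ∈ range M, y i| ≤ A) : |∑ i ∈ range n, f i * y i| ≤ f 0 * A := by
  have hparts : ∑ i ∈ range n, f i * y i = f n * ∑ i ∈ range n, y i +
      ∑ i ∈ range n, (f i - f (i + 1)) * ∑ k ∈ range (i + 1), y k := by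
    clear hf hf0 hy
    induction n with
    | zero => simp
    | succ n ih =>
      simp only [sum_range_succ _ n, ih]
      ring
  calc |∑ i ∈ range n, f i * y i|
      ≤ f n * A + ∑ i ∈ range n, (f i - f (i + 1)) * A := by
        rw [hparts]
        refine (abs_add_le _ _).trans (add_le_add ?_ ((abs_sum_le_sum_abs _ _).trans
          (sum_le_sum fun i hi => ?_)))
        · rw [abs_mul, abs_of_nonneg hf0]
          exact mul_le_mul_of_nonneg_left (hy n le_rfl) hf0
        · rw [mem_range] at hi
          have hstep : 0 ≤ f i - f (i + 1) :=
            sub_nonneg.mpr (hf (Set.mem_Iic.2 hi.le) (Set.mem_Iic.2 hi) i.le_succ)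
          rw [abs_mul, abs_of_nonneg hstep]
          exact mul_le_mul_of_nonneg_left (hy _ hi) hstep
    _ = f 0 * A := by
        rw [← sum_mul, sum_range_sub']
        ring

/-! ### Passing to a net of scales -/

/-- The radii `1 ^ (1 / D), 2 ^ (1 / D), 3 ^ (1 / D), …` of the scales at which the maximal
inequality is applied: close enough together for the gaps to be controlled, and far enough apart
for `∑ j, netRadius D j ^ (-(D + 1))` to converge. -/
def netRadius (D j : ℕ) : ℝ := ((j + 1 : ℕ) : ℝ) ^ ((D : ℝ)⁻¹)

theorem netRadius_pow {D : ℕ} (hD : D ≠ 0) (j : ℕ) : netRadius D j ^ D = ((j + 1 : ℕ) : ℝ) :=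
  Real.rpow_inv_natCast_pow (Nat.cast_nonneg _) hD

theorem one_le_netRadius (D j : ℕ) : 1 ≤ netRadius D j :=
  Real.one_le_rpow (by simp) (by positivity)

theorem summable_inv_netRadius_pow {D : ℕ} (hD : D ≠ 0) :
    Summable fun j => (netRadius D j ^ (D + 1))⁻¹ := by
  have hsum : Summable fun j : ℕ => ((j : ℝ) ^ (1 + (D : ℝ)⁻¹))⁻¹ :=
    Real.summable_nat_rpow_inv.mpr (by simpa using hD.bot_lt)
  refine ((summable_nat_add_iff 1).mpr hsum).congr fun j => ?_
  have hj : (0 : ℝ) < ((j + 1 : ℕ) : ℝ) := by positivity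
  rw [pow_succ, netRadius_pow hD, netRadius, Real.rpow_add hj, Real.rpow_one]

theorem one_add_pow_le_one_add_mul (s : ℕ) {x : ℝ} (hx0 : 0 ≤ x) (hx1 : x ≤ 1) :
    (1 + x) ^ s ≤ 1 + 2 ^ s * x := by
  suffices h : (1 + x) ^ s ≤ 1 + (2 ^ s - 1) * x by linarith
  induction s with
  | zero => simp
  | succ s ih =>
    have hpow : (1 : ℝ) ≤ 2 ^ s := one_le_pow₀ one_le_two
    calc (1 + x) ^ (s + 1) ≤ (1 + (2 ^ s - 1) * x) * (1 + x) := by rw [pow_succ]; gcongr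
      _ ≤ 1 + (2 ^ (s + 1) - 1) * x := by
        rw [pow_succ]
        nlinarith [mul_nonneg (sub_nonneg.2 hpow) (mul_nonneg hx0 (sub_nonneg.2 hx1))]

theorem exists_netRadius_le_and_pow_le {D : ℕ} (hD : D ≠ 0) (s : ℕ) {l : ℝ} (hl : 1 ≤ l) :
    ∃ j : ℕ, netRadius D j ≤ l ∧ l ≤ 2 * netRadius D j ∧
      l ^ s ≤ (1 + 2 ^ s / ((j + 1 : ℕ) : ℝ)) * netRadius D j ^ s := by
  obtain ⟨j, hj⟩ : ∃ j, ⌊l ^ D⌋₊ = j + 1 :=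
    Nat.exists_eq_succ_of_ne_zero (Nat.floor_pos.2 (one_le_pow₀ hl)).ne'
  have hJl : ((j + 1 : ℕ) : ℝ) ≤ l ^ D := hj ▸ Nat.floor_le (by positivity)
  have hlJ : l ^ D < ((j + 1 : ℕ) : ℝ) + 1 := hj ▸ Nat.lt_floor_add_one _
  have hRD := netRadius_pow hD j
  have hR : 0 < netRadius D j := zero_lt_one.trans_le (one_le_netRadius D j)
  have hJ : (1 : ℝ) ≤ ((j + 1 : ℕ) : ℝ) := by simp
  set R := netRadius D j
  set J : ℝ := ((j + 1 : ℕ) : ℝ)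
  have hRl : R ≤ l := le_of_pow_le_pow_left₀ hD (by positivity) (hRD.trans_le hJl)
  have hJ1 : 1 / J ≤ 1 := (div_le_one (by linarith)).2 hJ
  have hratio : l / R ≤ 1 + 1 / J := by
    calc l / R ≤ (l / R) ^ D := le_self_pow₀ ((one_le_div hR).2 hRl) hD
      _ = l ^ D / J := by rw [div_pow, hRD]
      _ ≤ (J + 1) / J := by gcongr
      _ = 1 + 1 / J := by field_simp
  refine ⟨j, hRl, (div_le_iff₀ hR).1 (by linarith), ?_⟩
  rw [← div_le_iff₀ (by positivity), ← div_pow]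
  calc (l / R) ^ s ≤ (1 + 1 / J) ^ s := by gcongr
    _ ≤ 1 + 2 ^ s * (1 / J) := one_add_pow_le_one_add_mul s (by positivity) hJ1
    _ = 1 + 2 ^ s / J := by ring

theorem exp_four_mul_le_two_pow_ceil (R : ℝ) : Real.exp (4 * R) ≤ 2 ^ ⌈8 * R⌉₊ := by
  rw [← Real.le_log_iff_exp_le (by positivity), Real.log_pow]
  nlinarith [Nat.le_ceil (8 * R), Real.log_two_gt_d9, Nat.cast_nonneg (α := ℝ) ⌈8 * R⌉₊]

theorem natCeil_eight_mul_add_one_le {R : ℝ} (hR : 1 ≤ R) : (⌈8 * R⌉₊ : ℝ) + 1 ≤ 10 * R := by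
  linarith [Nat.ceil_lt_add_one (by linarith : 0 ≤ 8 * R)]

theorem posLog_le_of_le_two_pow {x : ℝ} {K : ℕ} (hx0 : 0 ≤ x) (hx : x ≤ 2 ^ K) :
    Real.posLog x ≤ K := by
  calc Real.posLog x ≤ Real.posLog (2 ^ K) :=
        Real.monotoneOn_posLog hx0 (Set.mem_Ici.2 (by positivity)) hx
    _ = K * Real.log 2 := by rw [Real.posLog_pow, Real.posLog_eq_log (by norm_num)]
    _ ≤ K := mul_le_of_le_one_right (Nat.cast_nonneg K) (by linarith [Real.log_two_lt_d9])

/-- Nonnegative weights `w n`, at most `1 / z n` for thresholds `z n ∈ [0, n]`, whose sums against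
the divisor function up to `2 ^ K` are at most `H * (K + 1) ^ (D + 1)`. They bound the coefficients
of the random sums of dilated kernels. -/
structure PolylogWeight (z w : ℕ → ℝ) (D : ℕ) (H : ℝ) : Prop where
  threshold_nonneg : ∀ n, 0 ≤ z n
  threshold_le : ∀ n, z n ≤ n
  nonneg : ∀ n, 0 ≤ w n
  zero : w 0 = 0
  threshold_mul_le : ∀ n, z n * w n ≤ 1
  sum_divisors_le : ∀ K : ℕ, ∑ n ∈ range (2 ^ K), #n.divisors * w n ≤ H * (K + 1) ^ (D + 1)

namespace PolylogWeight

variable {z w c : ℕ → ℝ} {D s : ℕ} {H : ℝ}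

theorem const_nonneg (hw : PolylogWeight z w D H) : 0 ≤ H := by
  simpa using (sum_nonneg fun n _ => mul_nonneg (Nat.cast_nonneg _) (hw.nonneg n)).trans
    (hw.sum_divisors_le 0)

theorem sum_le (hw : PolylogWeight z w D H) (K : ℕ) :
    ∑ n ∈ range (2 ^ K), w n ≤ H * (K + 1) ^ (D + 1) := by
  refine (sum_le_sum fun n _ => ?_).trans (hw.sum_divisors_le K)
  rcases eq_or_ne n 0 with rfl | hn
  · simp [hw.zero]
  · exact le_mul_of_one_le_left (hw.nonneg n)
      (mod_cast card_pos.2 ⟨1, Nat.one_mem_divisors.2 hn⟩)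

theorem posLog_threshold_le (hw : PolylogWeight z w D H) {L : ℝ} (hL : 1 ≤ L) {K n : ℕ}
    (hn : n ≤ 2 ^ K) : Real.posLog (z n / L) ≤ K :=
  posLog_le_of_le_two_pow (div_nonneg (hw.threshold_nonneg n) (zero_le_one.trans hL))
    ((div_le_self (hw.threshold_nonneg n) hL).trans ((hw.threshold_le n).trans (mod_cast hn)))

theorem sum_sq_mul_le (hw : PolylogWeight z w D H) (hc : ∀ n, |c n| ≤ w n) {L : ℝ} (hL : 1 ≤ L)
    (K : ℕ) : ∑ n ∈ range (2 ^ K), c n ^ 2 *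
      (#n.divisors * (z n / L * (1 + Real.posLog (z n / L)))) ≤ H * (K + 1) ^ (D + 2) / L := by
  have hterm : ∀ n ∈ range (2 ^ K), c n ^ 2 *
      (#n.divisors * (z n / L * (1 + Real.posLog (z n / L)))) ≤
        #n.divisors * w n * ((K + 1) / L) := by
    intro n hn
    have hz := hw.threshold_nonneg n
    have hw0 := hw.nonneg n
    have hlog := hw.posLog_threshold_le hL (mem_range.1 hn).le
    have hlog0 := Real.posLog_nonneg (x := z n / L)
    have : 0 < L := by linarith
    calc c n ^ 2 * (#n.divisors * (z n / L * (1 + Real.posLog (z n / L))))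
        ≤ w n ^ 2 * (#n.divisors * (z n / L * (1 + K))) := by
          rw [← sq_abs (c n)]; gcongr; exact hc n
      _ = #n.divisors * (w n * (z n * w n)) * ((K + 1) / L) := by ring
      _ ≤ #n.divisors * w n * ((K + 1) / L) := by
          gcongr; exact mul_le_of_le_one_right hw0 (hw.threshold_mul_le n)
  calc _ ≤ (∑ n ∈ range (2 ^ K), #n.divisors * w n) * ((K + 1) / L) := by
        rw [sum_mul]; exact sum_le_sum hterm
    _ ≤ H * (K + 1) ^ (D + 1) * ((K + 1) / L) := by
        gcongr; exact hw.sum_divisors_le K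
    _ = H * (K + 1) ^ (D + 2) / L := by ring

theorem sq_mul_sum_sq_mul_div_le (hw : PolylogWeight z w D H) (hc : ∀ n, |c n| ≤ w n) {R : ℝ}
    (hR : 1 ≤ R) (hs : 2 * D + 3 ≤ s) :
    (⌈8 * R⌉₊ + 1) ^ 2 * (∑ n ∈ range (2 ^ ⌈8 * R⌉₊), c n ^ 2 *
      (#n.divisors * (z n / R ^ s * (1 + Real.posLog (z n / R ^ s))))) / R ^ 2 ≤
        10 ^ (D + 4) * H * (R ^ (D + 1))⁻¹ := by
  have hK := natCeil_eight_mul_add_one_le hR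
  have hsum := hw.sum_sq_mul_le hc (one_le_pow₀ hR (n := s)) ⌈8 * R⌉₊
  have hRs : R ^ (2 * D + 3) ≤ R ^ s := pow_le_pow_right₀ hR hs
  have hH := hw.const_nonneg
  set K := ⌈8 * R⌉₊
  calc _ ≤ (K + 1) ^ 2 * (H * (K + 1) ^ (D + 2) / R ^ s) / R ^ 2 := by gcongr
    _ ≤ (10 * R) ^ 2 * (H * (10 * R) ^ (D + 2) / R ^ (2 * D + 3)) / R ^ 2 := by gcongr
    _ = 10 ^ (D + 4) * H * (R ^ (D + 1))⁻¹ := by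
        field_simp
        ring

theorem ae_exists_forall_netRadius_abs_sum_le (hw : PolylogWeight z w D H) (hD : D ≠ 0)
    (hs : 2 * D + 3 ≤ s) (hc : ∀ n, |c n| ≤ w n) {f : ℕ → ℕ → ℝ → ℝ} {A : ℝ}
    (hf : ∀ j n, HasFourierDecay (f j n) (z n / netRadius D j ^ s) A) :
    ∀ᵐ t ∂(volume.restrict (Set.Ioc (0 : ℝ) 1)), ∃ C : ℝ, 0 ≤ C ∧ ∀ j,
      ∀ M ≤ 2 ^ ⌈8 * netRadius D j⌉₊,
        |∑ n ∈ range M, c n * f j n (n * t)| ≤ C * netRadius D j := by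
  have hR (j : ℕ) : 1 ≤ netRadius D j := one_le_netRadius D j
  have hR0 (j : ℕ) : 0 < netRadius D j := zero_lt_one.trans_le (hR j)
  have hc0 : c 0 = 0 := abs_nonpos_iff.1 ((hc 0).trans hw.zero.le)
  choose Q hQ hmax hQint using fun j => exists_integrable_forall_sq_sum_dilates_le (hf j)
    (fun n => div_nonneg (hw.threshold_nonneg n) (pow_nonneg (hR0 j).le s)) hc0
    ⌈8 * netRadius D j⌉₊
  have hQ0 (j : ℕ) (t : ℝ) : 0 ≤ Q j t / netRadius D j ^ 2 :=
    div_nonneg ((sq_nonneg _).trans (hmax j 0 (Nat.zero_le _) t)) (sq_nonneg _)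
  have hbound (j : ℕ) : ∫ t in Set.Ioc (0 : ℝ) 1, Q j t / netRadius D j ^ 2 ≤
      14 * A ^ 2 * (10 ^ (D + 4) * H * (netRadius D j ^ (D + 1))⁻¹) := by
    rw [integral_div]
    refine (div_le_div_of_nonneg_right (hQint j) (sq_nonneg _)).trans ?_
    rw [mul_left_comm, mul_div_assoc]
    gcongr
    exact hw.sq_mul_sum_sq_mul_div_le hc (hR j) hs
  have hsummable : Summable fun j => ∫ t in Set.Ioc (0 : ℝ) 1, Q j t / netRadius D j ^ 2 :=
    .of_nonneg_of_le (fun j => integral_nonneg (hQ0 j)) hbound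
      (((summable_inv_netRadius_pow hD).mul_left _).mul_left _)
  filter_upwards [ae_exists_forall_le_of_summable_integral (fun j => (hQ j).div_const _) hQ0
    hsummable] with t ⟨C, hC0, hC⟩
  refine ⟨√C, Real.sqrt_nonneg C, fun j M hM => ?_⟩
  refine abs_le_of_sq_le_sq ?_ (mul_nonneg (Real.sqrt_nonneg C) (hR0 j).le)
  rw [mul_pow, Real.sq_sqrt hC0]
  exact (hmax j M hM t).trans ((div_le_iff₀ (pow_pos (hR0 j) 2)).1 (hC j))

end PolylogWeight

theorem abs_sum_truncKernel_le_of_scale {z w c : ℕ → ℝ} (hz : ∀ n, 0 ≤ z n)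
    (hc : ∀ n, |c n| ≤ w n) {L T κ : ℝ} (hL : 0 < L) (hκ : 1 ≤ κ) (hLT : L ≤ T)
    (hTL : T ≤ κ * L) (M : ℕ) (t : ℝ) :
    |∑ n ∈ range M, c n * truncKernel (z n / T) (n * t)| ≤
      |∑ n ∈ range M, c n * truncKernel (z n / L) (n * t)| +
      |∑ n ∈ range M, w n * (truncWindow (z n / L) κ (n * t) -
        ∫ x in (0 : ℝ)..1, truncWindow (z n / L) κ x)| +
      2 * (κ - 1) * ∑ n ∈ range M, w n := by
  have hdiff (n : ℕ) : |c n * truncKernel (z n / T) (n * t) - c n * truncKernel (z n / L) (n * t)|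
      ≤ w n * (truncWindow (z n / L) κ (n * t) - ∫ x in (0 : ℝ)..1, truncWindow (z n / L) κ x) +
        2 * (κ - 1) * w n := by
    have hw0 : 0 ≤ w n := (abs_nonneg _).trans (hc n)
    have hX : 0 ≤ z n / L := div_nonneg (hz n) hL.le
    have hle : z n / T ≤ z n / L := div_le_div_of_nonneg_left (hz n) hL hLT
    have hge : z n / L ≤ κ * (z n / T) := by
      rw [← mul_div_assoc, div_le_div_iff₀ hL (hL.trans_le hLT), mul_right_comm, mul_comm]
      nlinarith [mul_le_mul_of_nonneg_left hTL (hz n)]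
    have hkernel := abs_truncKernel_sub_le hX (zero_le_one.trans hκ) hle hge (n * t)
    have hmean := mul_le_mul_of_nonneg_left (integral_truncWindow_le hX hκ) hw0
    have hmul := mul_le_mul (hc n) hkernel (abs_nonneg _) hw0
    rw [← mul_sub, abs_mul, abs_sub_comm]
    linarith
  have htotal := (abs_sum_le_sum_abs _ (range M)).trans (sum_le_sum fun n _ => hdiff n)
  rw [sum_sub_distrib, sum_add_distrib, ← mul_sum] at htotal
  linarith [abs_sub_abs_le_abs_sub (∑ n ∈ range M, c n * truncKernel (z n / T) (n * t))
      (∑ n ∈ range M, c n * truncKernel (z n / L) (n * t)),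
    le_abs_self (∑ n ∈ range M, w n * (truncWindow (z n / L) κ (n * t) -
      ∫ x in (0 : ℝ)..1, truncWindow (z n / L) κ x))]

namespace PolylogWeight

variable {z w c : ℕ → ℝ} {D s : ℕ} {H : ℝ}

theorem sum_mul_le_netRadius (hw : PolylogWeight z w D H) (hD : D ≠ 0) (s j : ℕ) {M : ℕ}
    (hM : M ≤ 2 ^ ⌈8 * netRadius D j⌉₊) :
    2 * (2 ^ s / ((j + 1 : ℕ) : ℝ)) * ∑ n ∈ range M, w n ≤
      2 * 2 ^ s * H * 10 ^ (D + 1) * netRadius D j := by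
  have hH := hw.const_nonneg
  have hR := one_le_netRadius D j
  have hsum : ∑ n ∈ range M, w n ≤ H * (10 * netRadius D j) ^ (D + 1) := by
    calc ∑ n ∈ range M, w n ≤ ∑ n ∈ range (2 ^ ⌈8 * netRadius D j⌉₊), w n :=
          sum_le_sum_of_subset_of_nonneg (range_mono hM) fun n _ _ => hw.nonneg n
      _ ≤ H * (⌈8 * netRadius D j⌉₊ + 1) ^ (D + 1) := hw.sum_le _
      _ ≤ H * (10 * netRadius D j) ^ (D + 1) := by
          gcongr; exact natCeil_eight_mul_add_one_le hR
  rw [← netRadius_pow hD j]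
  set R := netRadius D j
  calc 2 * (2 ^ s / R ^ D) * ∑ n ∈ range M, w n
      ≤ 2 * (2 ^ s / R ^ D) * (H * (10 * R) ^ (D + 1)) := by gcongr
    _ = 2 * 2 ^ s * H * 10 ^ (D + 1) * R := by
        have : R ≠ 0 := by linarith
        field_simp
        ring

theorem ae_exists_forall_abs_sum_truncKernel_le (hw : PolylogWeight z w D H) (hD : D ≠ 0)
    (hs : 2 * D + 3 ≤ s) (hc : ∀ n, |c n| ≤ w n) :
    ∀ᵐ t ∂(volume.restrict (Set.Ioc (0 : ℝ) 1)), ∃ C : ℝ, 0 ≤ C ∧ ∀ l : ℝ, 1 ≤ l →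
      ∀ M : ℕ, (M : ℝ) ≤ Real.exp (2 * l) →
        |∑ n ∈ range M, c n * truncKernel (z n / l ^ s) (n * t)| ≤ C * l := by
  have hL (j : ℕ) : 0 < netRadius D j ^ s :=
    pow_pos (zero_lt_one.trans_le (one_le_netRadius D j)) s
  have hX (j n : ℕ) : 0 ≤ z n / netRadius D j ^ s := div_nonneg (hw.threshold_nonneg n) (hL j).le
  set κ : ℕ → ℝ := fun j => 1 + 2 ^ s / ((j + 1 : ℕ) : ℝ) with hκ_def
  have hκ (j : ℕ) : 1 ≤ κ j := le_add_of_nonneg_right (by positivity)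
  have hκ_le (j : ℕ) : 2 * (κ j - 1) ≤ 2 * 2 ^ s := by
    simp only [hκ_def, add_sub_cancel_left]
    gcongr
    exact div_le_self (by positivity) (by simp)
  have hA : (1 : ℝ) ≤ 2 * 2 ^ s := by linarith [one_le_pow₀ one_le_two (a := (2 : ℝ)) (n := s)]
  have hkernel := hw.ae_exists_forall_netRadius_abs_sum_le hD hs hc
    fun j n => hasFourierDecay_truncKernel (hX j n)
  have hwindow := hw.ae_exists_forall_netRadius_abs_sum_le hD hs
    (fun n => (abs_of_nonneg (hw.nonneg n)).le)
    fun j n => hasFourierDecay_truncWindow_sub_integral (hX j n) (hκ j) hA (hκ_le j)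
  filter_upwards [hkernel, hwindow] with t ⟨C₁, hC₁, h₁⟩ ⟨C₂, hC₂, h₂⟩
  have hH := hw.const_nonneg
  refine ⟨C₁ + C₂ + 2 * 2 ^ s * H * 10 ^ (D + 1), by positivity, fun l hl M hM => ?_⟩
  obtain ⟨j, hRl, hlR, hpow⟩ := exists_netRadius_le_and_pow_le hD s hl
  have hMK : M ≤ 2 ^ ⌈8 * netRadius D j⌉₊ := by
    have hexp : Real.exp (2 * l) ≤ Real.exp (4 * netRadius D j) :=
      Real.exp_le_exp.2 (by linarith)
    exact_mod_cast (hM.trans hexp).trans (exp_four_mul_le_two_pow_ceil _)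
  have hcompare := abs_sum_truncKernel_le_of_scale hw.threshold_nonneg hc (hL j) (hκ j)
    (pow_le_pow_left₀ (zero_le_one.trans (one_le_netRadius D j)) hRl s) hpow M t
  have hmean := hw.sum_mul_le_netRadius hD s j hMK
  simp only [hκ_def, add_sub_cancel_left] at hcompare h₂
  calc _ ≤ (C₁ + C₂ + 2 * 2 ^ s * H * 10 ^ (D + 1)) * netRadius D j := by
        linarith [h₁ j M hMK, h₂ j M hMK]
    _ ≤ _ := by gcongr

end PolylogWeight

/-! ### Random weights -/

theorem integral_truncRecip {X : ℝ} (hX : 0 ≤ X) :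
    ∫ t in (0 : ℝ)..1, truncRecip X t = 2 * Real.posLog (X / 2) := by
  rcases le_total X 2 with hX2 | hX2
  · have hlog : Real.posLog (X / 2) = 0 :=
      Real.posLog_eq_zero_iff _ |>.2 (abs_le.2 ⟨by linarith, by linarith⟩)
    simp [truncRecip, not_one_lt_mul_nid hX hX2, hlog]
  have hX0 : 0 < X := by linarith
  have hle : X⁻¹ ≤ 1 / 2 := by rw [← one_div]; gcongr
  have hcoeff := (isBoundedPeriodic_truncRecip hX).unitFourierCoeff_of_even (k := 0) fun x hx => by
    simp only [truncRecip, nid_neg_of_mem_Ioo hx]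
  rw [unitFourierCoeff_zero, integral_eq_integral_of_eqOn_indicator (by positivity) hle le_rfl
    (g := fun x => x⁻¹), integral_inv_of_pos (by positivity) (by norm_num)] at hcoeff
  · rw [Complex.ofReal_injective hcoeff, Real.posLog_eq_log (le_abs.2 (.inl (by linarith)))]
    congr 2
    field_simp
  · intro x hx
    have hcut : 1 < X * x ↔ X⁻¹ < x := by rw [← one_lt_mul_nid_iff hX0 hx, nid_eq_self hx]
    simp only [truncRecip, hcut, nid_eq_self hx, Int.cast_zero, mul_zero,
      zero_mul, Real.cos_zero, one_mul, Set.indicator, Set.mem_Ioc, hx.2.le, and_true]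

theorem IsBoundedPeriodic.integral_dilate {f : ℝ → ℝ} (hf : IsBoundedPeriodic f) {n : ℕ}
    (hn : n ≠ 0) : ∫ t in (0 : ℝ)..1, f (n * t) = ∫ t in (0 : ℝ)..1, f t := by
  have hcoeff := hf.unitFourierCoeff_dilate_mul hn 0
  rw [mul_zero, unitFourierCoeff_zero, unitFourierCoeff_zero] at hcoeff
  exact Complex.ofReal_injective hcoeff

/-- The uniform distribution on the unit interval. -/
abbrev unitMeasure : Measure ℝ := volume.restrict (Set.Ioc 0 1)

/-- The product of the distances of the numbers `x * β i` to the nearest integers. -/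
def distProd {e : ℕ} (β : Fin e → ℝ) (x : ℝ) : ℝ := ∏ i, nid (x * β i)

/-- The reciprocal of `n * distProd β n`, truncated in every coordinate at height `n`. -/
def recipWeight {e : ℕ} (β : Fin e → ℝ) (n : ℕ) : ℝ := (n : ℝ)⁻¹ * ∏ i, truncRecip n (n * β i)

variable {e : ℕ}

theorem distProd_nonneg (β : Fin e → ℝ) (x : ℝ) : 0 ≤ distProd β x :=
  prod_nonneg fun _ _ => nid_nonneg _

theorem nid_le_one (x : ℝ) : nid x ≤ 1 := (nid_le_half x).trans (by norm_num)

theorem distProd_le_nid (β : Fin e → ℝ) (x : ℝ) (i : Fin e) : distProd β x ≤ nid (x * β i) := by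
  rw [distProd, ← mul_prod_erase univ _ (mem_univ i)]
  exact mul_le_of_le_one_right (nid_nonneg _)
    (prod_le_one (fun _ _ => nid_nonneg _) fun _ _ => nid_le_one _)

theorem distProd_le_one (β : Fin e → ℝ) (x : ℝ) : distProd β x ≤ 1 :=
  prod_le_one (fun _ _ => nid_nonneg _) fun _ _ => nid_le_one _

theorem recipWeight_nonneg (β : Fin e → ℝ) (n : ℕ) : 0 ≤ recipWeight β n :=
  mul_nonneg (by positivity) (prod_nonneg fun _ _ => truncRecip_nonneg _ _)

theorem recipWeight_zero (β : Fin e → ℝ) : recipWeight β 0 = 0 := by simp [recipWeight]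

theorem nid_mul_truncRecip_le_one (X t : ℝ) : nid t * truncRecip X t ≤ 1 := by
  rw [truncRecip]
  split_ifs
  · exact mul_inv_le_one
  · simp

theorem mul_distProd_mul_recipWeight_le (β : Fin e → ℝ) (n : ℕ) :
    n * distProd β n * recipWeight β n ≤ 1 := by
  calc (n : ℝ) * distProd β n * recipWeight β n
      = n * (n : ℝ)⁻¹ * ∏ i, nid (n * β i) * truncRecip n (n * β i) := by
        rw [distProd, recipWeight, prod_mul_distrib]; ring
    _ ≤ 1 * 1 := by
        gcongr
        · exact prod_nonneg fun _ _ => mul_nonneg (nid_nonneg _) (truncRecip_nonneg _ _)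
        · exact mul_inv_le_one
        · exact prod_le_one (fun _ _ => mul_nonneg (nid_nonneg _) (truncRecip_nonneg _ _))
            fun _ _ => nid_mul_truncRecip_le_one _ _
    _ = 1 := one_mul 1

theorem integrable_recipWeight (e n : ℕ) :
    Integrable (fun β : Fin e → ℝ => recipWeight β n) (Measure.pi fun _ => unitMeasure) :=
  (Integrable.fintype_prod (f := fun _ t => truncRecip n (n * t)) fun _ =>
    (((isBoundedPeriodic_truncRecip n.cast_nonneg).dilate n).intervalIntegrable 0 1).1).const_mul _

theorem integral_recipWeight_le {n K : ℕ} (hK : n ≤ 2 ^ K) :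
    ∫ β : Fin e → ℝ, recipWeight β n ∂(Measure.pi fun _ => unitMeasure) ≤
      (n : ℝ)⁻¹ * (2 * (K + 1)) ^ e := by
  rcases eq_or_ne n 0 with rfl | hn
  · simp [recipWeight]
  have hmean : ∫ t in Set.Ioc (0 : ℝ) 1, truncRecip n (n * t) = 2 * Real.posLog (n / 2) := by
    rw [← intervalIntegral.integral_of_le zero_le_one,
      (isBoundedPeriodic_truncRecip n.cast_nonneg).integral_dilate hn,
      integral_truncRecip n.cast_nonneg]
  have hlog : Real.posLog ((n : ℝ) / 2) ≤ K :=
    posLog_le_of_le_two_pow (by positivity)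
      ((half_le_self n.cast_nonneg).trans (mod_cast hK))
  simp only [recipWeight]
  rw [integral_const_mul, integral_fintype_prod_eq_pow (fun t => truncRecip n (n * t)), hmean,
    Fintype.card_fin]
  gcongr
  · exact mul_nonneg zero_le_two Real.posLog_nonneg
  · linarith

theorem sum_card_divisors_mul_inv_le (K : ℕ) :
    ∑ n ∈ range (2 ^ K), (#n.divisors : ℝ) * (n : ℝ)⁻¹ ≤ (K + 1) ^ 2 := by
  have hharmonic : ∑ a ∈ Ico (1 : ℕ) (2 ^ K), (a : ℝ)⁻¹ ≤ K + 1 := by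
    calc ∑ a ∈ Ico (1 : ℕ) (2 ^ K), (a : ℝ)⁻¹ ≤ ∑ a ∈ Icc (1 : ℕ) (2 ^ K), (a : ℝ)⁻¹ :=
          sum_le_sum_of_subset_of_nonneg Ico_subset_Icc_self fun _ _ _ => by positivity
      _ = (harmonic (2 ^ K) : ℝ) := by rw [harmonic_eq_sum_Icc]; push_cast; rfl
      _ ≤ 1 + Real.log ((2 ^ K : ℕ) : ℝ) := harmonic_le_one_add_log _
      _ ≤ K + 1 := by
          rw [Nat.cast_pow, Real.log_pow, add_comm]
          gcongr
          exact mul_le_of_le_one_right K.cast_nonneg (by norm_num; linarith [Real.log_two_lt_d9])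
  calc ∑ n ∈ range (2 ^ K), (#n.divisors : ℝ) * (n : ℝ)⁻¹
      = ∑ n ∈ Ico (1 : ℕ) (2 ^ K), (#n.divisors : ℝ) * (n : ℝ)⁻¹ := by
        rw [range_eq_Ico, sum_eq_sum_Ico_succ_bot (by positivity)]
        simp
    _ ≤ ∑ a ∈ Ico (1 : ℕ) (2 ^ K), ∑ b ∈ Ico (1 : ℕ) (2 ^ K), (((a * b : ℕ) : ℝ))⁻¹ :=
        sum_card_divisors_mul_le (h := fun n => (n : ℝ)⁻¹) (fun _ => by positivity) _
    _ = (∑ a ∈ Ico (1 : ℕ) (2 ^ K), (a : ℝ)⁻¹) ^ 2 := by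
        rw [sq, sum_mul_sum]
        simp only [Nat.cast_mul, mul_inv]
    _ ≤ (K + 1) ^ 2 := by gcongr

theorem integral_sum_divisors_mul_recipWeight_le (e K : ℕ) :
    ∫ β : Fin e → ℝ, ∑ n ∈ range (2 ^ K), #n.divisors * recipWeight β n
      ∂(Measure.pi fun _ => unitMeasure) ≤ 2 ^ e * ((K : ℝ) + 1) ^ (e + 2) := by
  rw [integral_finsetSum _ fun n _ => (integrable_recipWeight e n).const_mul _]
  calc _ ≤ ∑ n ∈ range (2 ^ K), (#n.divisors : ℝ) * (n : ℝ)⁻¹ * (2 * ((K : ℝ) + 1)) ^ e := by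
        refine sum_le_sum fun n hn => ?_
        rw [integral_const_mul, mul_assoc]
        gcongr
        exact integral_recipWeight_le (mem_range.1 hn).le
    _ ≤ ((K : ℝ) + 1) ^ 2 * (2 * ((K : ℝ) + 1)) ^ e := by
        rw [← sum_mul]
        gcongr
        exact sum_card_divisors_mul_inv_le K
    _ = 2 ^ e * ((K : ℝ) + 1) ^ (e + 2) := by rw [mul_pow]; ring

theorem exists_le_two_pow_le_two_mul (K : ℕ) : ∃ r : ℕ, K ≤ 2 ^ r ∧ 2 ^ r ≤ 2 * (K + 1) := by
  refine ⟨Nat.log 2 (K + 1) + 1, ?_, ?_⟩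
  · exact K.le_succ.trans (Nat.lt_pow_succ_log_self one_lt_two (K + 1)).le
  · rw [pow_succ, mul_comm]
    exact Nat.mul_le_mul_left 2 (Nat.pow_log_le_self 2 K.succ_ne_zero)

theorem ae_exists_forall_le_mul_pow_succ {Ω : Type*} [MeasurableSpace Ω] {μ : Measure Ω}
    {F : ℕ → Ω → ℝ} (hF : ∀ K, Integrable (F K) μ) (hF0 : ∀ K t, 0 ≤ F K t)
    (hmono : ∀ t, Monotone fun K => F K t) {B : ℝ} {p : ℕ}
    (hint : ∀ K : ℕ, ∫ t, F K t ∂μ ≤ B * (K + 1) ^ p) :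
    ∀ᵐ t ∂μ, ∃ H : ℝ, ∀ K : ℕ, F K t ≤ H * (K + 1) ^ (p + 1) := by
  have hB : 0 ≤ B := by simpa using (integral_nonneg (hF0 0)).trans (hint 0)
  have hsum : Summable fun r : ℕ => ∫ t, F (2 ^ r) t / (2 ^ r + 1) ^ (p + 1) ∂μ := by
    refine .of_nonneg_of_le (fun r => integral_nonneg fun t => div_nonneg (hF0 _ t) (by positivity))
      (fun r => ?_) (summable_geometric_two.mul_left B)
    have hr := hint (2 ^ r)
    push_cast at hr
    rw [integral_div]
    calc (∫ t, F (2 ^ r) t ∂μ) / (2 ^ r + 1) ^ (p + 1)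
        ≤ B * (2 ^ r + 1) ^ p / (2 ^ r + 1) ^ (p + 1) := by gcongr
      _ = B * ((2 : ℝ) ^ r + 1)⁻¹ := by
          rw [pow_succ]
          field_simp
      _ ≤ B * ((2 : ℝ) ^ r)⁻¹ := by gcongr; linarith
      _ = B * (1 / 2) ^ r := by rw [one_div, inv_pow]
  filter_upwards [ae_exists_forall_le_of_summable_integral
    (fun r => (hF (2 ^ r)).div_const ((2 ^ r + 1) ^ (p + 1)))
    (fun r t => div_nonneg (hF0 _ t) (by positivity)) hsum] with t ⟨C, hC0, hC⟩
  refine ⟨C * 3 ^ (p + 1), fun K => ?_⟩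
  obtain ⟨r, hKr, hrK⟩ := exists_le_two_pow_le_two_mul K
  have hrK' : (2 : ℝ) ^ r ≤ 2 * (K + 1) := by exact_mod_cast hrK
  calc F K t ≤ F (2 ^ r) t := hmono t hKr
    _ ≤ C * (2 ^ r + 1) ^ (p + 1) := (div_le_iff₀ (by positivity)).1 (hC r)
    _ ≤ C * (3 * (K + 1)) ^ (p + 1) := by
        gcongr
        linarith [K.cast_nonneg (α := ℝ)]
    _ = C * 3 ^ (p + 1) * (K + 1) ^ (p + 1) := by rw [mul_pow]; ring

theorem ae_exists_polylogWeight (e : ℕ) :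
    ∀ᵐ β : Fin e → ℝ ∂(Measure.pi fun _ => unitMeasure), ∃ H : ℝ,
      PolylogWeight (fun n => n * distProd β n) (recipWeight β) (e + 2) H := by
  have hterm (β : Fin e → ℝ) (n : ℕ) : 0 ≤ #n.divisors * recipWeight β n :=
    mul_nonneg (Nat.cast_nonneg _) (recipWeight_nonneg β n)
  filter_upwards [ae_exists_forall_le_mul_pow_succ
    (F := fun K (β : Fin e → ℝ) => ∑ n ∈ range (2 ^ K), #n.divisors * recipWeight β n)
    (fun K => integrable_finsetSum _ fun n _ => (integrable_recipWeight e n).const_mul _)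
    (fun K β => sum_nonneg fun n _ => hterm β n)
    (fun β K K' hK => sum_le_sum_of_subset_of_nonneg
      (range_mono (Nat.pow_le_pow_right two_pos hK)) fun n _ _ => hterm β n)
    (integral_sum_divisors_mul_recipWeight_le e)] with β ⟨H, hH⟩
  exact ⟨H,
    { threshold_nonneg := fun n => mul_nonneg n.cast_nonneg (distProd_nonneg β n)
      threshold_le := fun n => mul_le_of_le_one_right n.cast_nonneg (distProd_le_one β n)
      nonneg := recipWeight_nonneg β
      zero := recipWeight_zero β
      threshold_mul_le := mul_distProd_mul_recipWeight_le β
      sum_divisors_le := hH }⟩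

/-! ### The sum over positive frequencies -/

/-- The product of the damped kernels at `n * β i`, each cut off at height `n`, divided by `n`. -/
def recipKernel {e : ℕ} (β : Fin e → ℝ) (n : ℕ) : ℝ :=
  (n : ℝ)⁻¹ * ∏ i, truncKernel n (n * β i)

/-- The values of the frequency `n₁` over the index set `U4 d s N α`, for irrational `α`. -/
def freqSet {d : ℕ} (s N : ℕ) (α : Fin d → ℝ) : Set ℤ :=
  {m | 1 < |(m : ℝ)| ∧ |(m : ℝ)| < (N : ℝ) ^ 2 / 4 ∧ Real.log N ^ s < |(m : ℝ)| * distProd α m}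

/-- The summand of the Fourier sum at the element of `U4 d s N α` with `n₁ = m`. -/
def freqTerm {d : ℕ} (N : ℕ) (α : Fin d → ℝ) (m : ℤ) : ℝ :=
  sr (m / (N : ℝ) ^ 2) ^ 2 * ((m : ℝ)⁻¹ * ∏ i, dampedInv (centeredFract (m * α i)))

/-- The part of the Fourier sum over `U4 d s N α` with `n₁ > 0`. -/
def posFreqSum {d : ℕ} (s N : ℕ) (α : Fin d → ℝ) : ℝ :=
  ∑ n ∈ range ⌈(N : ℝ) ^ 2 / 4⌉₊, (freqSet s N α).indicator (freqTerm N α) n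

theorem abs_recipKernel_le (β : Fin e → ℝ) (n : ℕ) : |recipKernel β n| ≤ recipWeight β n := by
  rw [recipKernel, recipWeight, abs_mul, abs_of_nonneg (inv_nonneg.2 n.cast_nonneg), abs_prod]
  gcongr
  exact abs_truncKernel_le _ _

theorem recipKernel_eq_of_one_lt {β : Fin e → ℝ} {n : ℕ} (h : 1 < n * distProd β n) :
    recipKernel β n = (n : ℝ)⁻¹ * ∏ i, dampedInv (centeredFract (n * β i)) := by
  refine congrArg _ (prod_congr rfl fun i _ => if_pos (h.trans_le ?_))
  gcongr
  exact distProd_le_nid β n i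

theorem one_lt_log_of_three_le {N : ℕ} (hN : 3 ≤ N) : 1 < Real.log N := by
  rw [Real.lt_log_iff_exp_lt (by positivity)]
  have : (3 : ℝ) ≤ N := by exact_mod_cast hN
  linarith [Real.exp_one_lt_d9]

theorem distProd_cons (t : ℝ) (β : Fin e → ℝ) (x : ℝ) :
    distProd (Fin.cons t β : Fin (e + 1) → ℝ) x = nid (x * t) * distProd β x := by
  simp only [distProd, Fin.prod_univ_succ, Fin.cons_zero, Fin.cons_succ]

theorem natCast_mem_freqSet_iff {d s N : ℕ} (hN : 3 ≤ N) {α : Fin d → ℝ} {n : ℕ}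
    (hn : n < ⌈(N : ℝ) ^ 2 / 4⌉₊) :
    (n : ℤ) ∈ freqSet s N α ↔ Real.log N ^ s < n * distProd α n := by
  simp only [freqSet, Set.mem_ofPred_eq, Int.cast_natCast, Nat.abs_cast]
  refine ⟨fun h => h.2.2, fun h => ⟨?_, Nat.lt_ceil.1 hn, h⟩⟩
  calc (1 : ℝ) ≤ Real.log N ^ s := one_le_pow₀ (one_lt_log_of_three_le hN).le
    _ < n * distProd α n := h
    _ ≤ n := mul_le_of_le_one_right n.cast_nonneg (distProd_le_one α n)

theorem indicator_freqTerm_cons {s N : ℕ} (hN : 3 ≤ N) (t : ℝ) (β : Fin e → ℝ) {n : ℕ}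
    (hn : n < ⌈(N : ℝ) ^ 2 / 4⌉₊) :
    (freqSet s N (Fin.cons t β : Fin (e + 1) → ℝ)).indicator (freqTerm N (Fin.cons t β)) n =
      Real.sinc (2 * Real.pi * (n / (N : ℝ) ^ 2)) ^ 2 *
        (recipKernel β n * truncKernel (n * distProd β n / Real.log N ^ s) (n * t)) := by
  have hlog : 1 ≤ Real.log N ^ s := one_le_pow₀ (one_lt_log_of_three_le hN).le
  have hmem : (n : ℤ) ∈ freqSet s N (Fin.cons t β : Fin (e + 1) → ℝ) ↔
      1 < n * distProd β n / Real.log N ^ s * nid (n * t) := by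
    rw [natCast_mem_freqSet_iff hN hn, distProd_cons, div_mul_eq_mul_div,
      one_lt_div (by positivity), mul_left_comm, mul_comm (nid _)]
  classical
  rw [Set.indicator_apply, truncKernel, mul_ite, mul_ite, mul_zero, mul_zero]
  refine if_ctx_congr hmem (fun h => ?_) fun _ => rfl
  have hone : 1 < n * distProd β n := by
    calc 1 ≤ Real.log N ^ s := hlog
      _ < n * distProd β n * nid (n * t) := by
        rwa [div_mul_eq_mul_div, one_lt_div (by positivity)] at h
      _ ≤ n * distProd β n :=
        mul_le_of_le_one_right (mul_nonneg n.cast_nonneg (distProd_nonneg β n)) (nid_le_one _)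
  have hn0 : (n : ℝ) ≠ 0 := fun h0 => by norm_num [h0] at hone
  rw [freqTerm, Int.cast_natCast, sr_eq_sinc (div_ne_zero hn0 (by positivity)),
    recipKernel_eq_of_one_lt hone]
  simp only [Fin.prod_univ_succ, Fin.cons_zero, Fin.cons_succ]
  ring

theorem antitoneOn_sinc_sq (N : ℕ) :
    AntitoneOn (fun n : ℕ => Real.sinc (2 * Real.pi * (n / (N : ℝ) ^ 2)) ^ 2)
      {n | (n : ℝ) ≤ (N : ℝ) ^ 2 / 2} := by
  have harg {n : ℕ} (hn : (n : ℝ) ≤ (N : ℝ) ^ 2 / 2) :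
      2 * Real.pi * (n / (N : ℝ) ^ 2) ∈ Set.Icc 0 Real.pi :=
    two_pi_mul_mem_Icc (by positivity) (div_le_of_le_mul₀ (by positivity) (by norm_num)
      (by linarith))
  intro m hm n hn hmn
  have := antitoneOn_sinc (harg hm) (harg hn) (by gcongr)
  exact pow_le_pow_left₀ (sinc_nonneg (harg hn)) this 2

theorem ceil_sq_div_four_le_half {N : ℕ} (hN : 3 ≤ N) :
    (⌈(N : ℝ) ^ 2 / 4⌉₊ : ℝ) ≤ (N : ℝ) ^ 2 / 2 := by
  have hN' : (3 : ℝ) ≤ N := by exact_mod_cast hN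
  nlinarith [Nat.ceil_lt_add_one (show 0 ≤ (N : ℝ) ^ 2 / 4 by positivity)]

theorem ae_abs_posFreqSum_cons_le {s : ℕ} (hs : 2 * (e + 1) + 5 ≤ s) {β : Fin e → ℝ} {H : ℝ}
    (hβ : PolylogWeight (fun n => n * distProd β n) (recipWeight β) (e + 2) H) :
    ∀ᵐ t ∂unitMeasure, ∃ C : ℕ, ∀ N : ℕ, 3 ≤ N →
      |posFreqSum s N (Fin.cons t β : Fin (e + 1) → ℝ)| ≤ C * Real.log N := by
  filter_upwards [hβ.ae_exists_forall_abs_sum_truncKernel_le (by omega) (by omega)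
    (abs_recipKernel_le β)] with t ⟨C, _, hC⟩
  obtain ⟨C', hC'⟩ := exists_nat_ge C
  refine ⟨C', fun N hN => ?_⟩
  have hlog := one_lt_log_of_three_le hN
  have hexp : Real.exp (2 * Real.log N) = (N : ℝ) ^ 2 := by
    rw [mul_comm, Real.exp_mul, Real.exp_log (by positivity), Real.rpow_two]
  rw [posFreqSum, sum_congr rfl fun n hn => indicator_freqTerm_cons hN t β (mem_range.1 hn)]
  have hceil := ceil_sq_div_four_le_half hN
  have habel := abs_sum_range_mul_le_of_antitoneOn
    ((antitoneOn_sinc_sq N).mono fun n hn => (Nat.cast_le.2 hn).trans hceil) (sq_nonneg _)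
    fun M hM => hC (Real.log N) hlog.le M <| by
      rw [hexp]
      exact ((Nat.cast_le.2 hM).trans hceil).trans (half_le_self (by positivity))
  refine habel.trans ?_
  simp only [Nat.cast_zero, zero_div, mul_zero, Real.sinc_zero, one_pow, one_mul]
  gcongr

theorem measurable_distProd (d : ℕ) (m : ℤ) :
    Measurable fun α : Fin d → ℝ => distProd α m :=
  Finset.measurable_fun_prod _ fun i _ =>
    measurable_nid.comp (by fun_prop : Measurable fun α : Fin d → ℝ => (m : ℝ) * α i)

theorem measurable_freqTerm (d N : ℕ) (m : ℤ) :
    Measurable fun α : Fin d → ℝ => freqTerm N α m :=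
  .const_mul (.const_mul (Finset.measurable_fun_prod _ fun i _ => (measurable_dampedInv.comp
    measurable_centeredFract).comp ((measurable_pi_apply i).const_mul _)) _) _

theorem measurableSet_mem_freqSet (d s N : ℕ) (m : ℤ) :
    MeasurableSet {α : Fin d → ℝ | m ∈ freqSet s N α} :=
  (MeasurableSet.const _).inter <| (MeasurableSet.const _).inter <|
    measurableSet_lt measurable_const ((measurable_distProd d m).const_mul _)

theorem measurable_posFreqSum (d s N : ℕ) : Measurable fun α : Fin d → ℝ => posFreqSum s N α :=
  Finset.measurable_fun_sum _ fun n _ =>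
    Measurable.ite (measurableSet_mem_freqSet d s N n) (measurable_freqTerm d N n) measurable_const

theorem measurableSet_abs_posFreqSum_le (d s : ℕ) : MeasurableSet
    {α : Fin d → ℝ | ∃ C : ℕ, ∀ N : ℕ, 3 ≤ N → |posFreqSum s N α| ≤ C * Real.log N} := by
  simp only [Set.ofPred_exists, Set.ofPred_forall]
  exact .iUnion fun C => .iInter fun N => .iInter fun _ =>
    measurableSet_le (measurable_posFreqSum d s N).norm measurable_const

theorem ae_pi_succ_of_ae_ae_cons {X : Type*} [MeasurableSpace X] {μ : Measure X} [SigmaFinite μ]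
    {p : (Fin (e + 1) → X) → Prop} (hp : MeasurableSet {α | p α})
    (h : ∀ᵐ β ∂(Measure.pi fun _ : Fin e => μ), ∀ᵐ t ∂μ, p (Fin.cons t β)) :
    ∀ᵐ α ∂(Measure.pi fun _ : Fin (e + 1) => μ), p α := by
  set φ := MeasurableEquiv.piFinSuccAbove (fun _ : Fin (e + 1) => X) 0
  have hcons (t : X) (β : Fin e → X) : φ.symm (t, β) = Fin.cons t β := Fin.insertNth_zero' t β
  have hpφ : MeasurableSet {z | p (φ.symm z)} := φ.symm.measurable hp
  have hprod : ∀ᵐ z ∂(μ.prod (Measure.pi fun _ : Fin e => μ)), p (φ.symm z) := by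
    rw [Measure.ae_prod_iff_ae_ae hpφ,
      Measure.ae_ae_comm (p := fun t β => p (φ.symm (t, β))) hpφ]
    simpa only [hcons] using h
  filter_upwards [(measurePreserving_piFinSuccAbove (fun _ => μ) 0).quasiMeasurePreserving.ae hprod]
    with α hα
  rwa [φ.symm_apply_apply] at hα

theorem ae_abs_posFreqSum_le {s : ℕ} (hs : 2 * (e + 1) + 5 ≤ s) :
    ∀ᵐ α : Fin (e + 1) → ℝ ∂(Measure.pi fun _ => unitMeasure), ∃ C : ℕ, ∀ N : ℕ, 3 ≤ N →
      |posFreqSum s N α| ≤ C * Real.log N := by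
  refine ae_pi_succ_of_ae_ae_cons (measurableSet_abs_posFreqSum_le (e + 1) s) ?_
  filter_upwards [ae_exists_polylogWeight e] with β ⟨H, hH⟩
  exact ae_abs_posFreqSum_cons_le hs hH

/-! ### Reduction to positive frequencies -/

theorem eq_round_of_abs_sub_eq {x : ℝ} (hx : Irrational x) {z : ℤ} (h : |x - z| = nid x) :
    z = round x := by
  rcases abs_eq_abs.1 h with h | h
  · exact_mod_cast sub_right_injective h
  · refine absurd ⟨((z + round x : ℤ) : ℚ) / 2, ?_⟩ hx
    push_cast
    linarith

theorem nid_neg (x : ℝ) : nid (-x) = nid x := by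
  have hle (y : ℝ) : nid (-y) ≤ nid y := (round_le (-y) (-round y)).trans_eq <| by
    rw [Int.cast_neg, neg_sub_neg, abs_sub_comm, nid]
  exact (hle x).antisymm ((congrArg nid (neg_neg x)).symm.trans_le (hle (-x)))

theorem centeredFract_neg {x : ℝ} (hx : Irrational x) :
    centeredFract (-x) = -centeredFract x := by
  have hround : -round (-x) = round x := by
    refine eq_round_of_abs_sub_eq hx ?_
    rw [Int.cast_neg, ← nid_neg, nid, ← abs_neg, neg_sub, neg_sub_left, neg_add']
  rw [centeredFract, centeredFract, ← hround]
  push_cast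
  ring

theorem U4_eq_image_freqSet {d : ℕ} (s N : ℕ) {α : Fin d → ℝ} (hα : ∀ i, Irrational (α i)) :
    U4 d s N α = (fun m : ℤ => (Fin.cons m fun i => round (m * α i) : Fin (d + 1) → ℤ)) ''
      freqSet s N α := by
  ext n
  constructor
  · rintro ⟨hone, hlt, hround, hlog⟩
    refine ⟨n 0, ⟨hone, hlt, hlog⟩, ?_⟩
    have hn0 : n 0 ≠ 0 := fun h0 => by norm_num [h0] at hone
    have htail : (fun i => round (n 0 * α i)) = Fin.tail n := funext fun i =>
      (eq_round_of_abs_sub_eq ((hα i).intCast_mul hn0) (hround i)).symm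
    simp only [htail, Fin.cons_self_tail]
  · rintro ⟨m, ⟨hone, hlt, hlog⟩, rfl⟩
    exact ⟨hone, hlt, fun i => rfl, hlog⟩

theorem tsum_U4_eq_tsum_indicator {d : ℕ} (s N : ℕ) {α : Fin d → ℝ}
    (hα : ∀ i, Irrational (α i)) :
    ∑' n : U4 d s N α, gterm d N α n.1 / ((n.1 0 : ℝ) * ∏ i, th α n.1 i) =
      ∑' m : ℤ, (freqSet s N α).indicator (freqTerm N α) m := by
  rw [U4_eq_image_freqSet s N hα, ← _root_.tsum_subtype,
    tsum_image (fun n => gterm d N α n / ((n 0 : ℝ) * ∏ i, th α n i))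
      (Function.LeftInverse.injective (g := fun n => n 0) fun _ => rfl).injOn]
  refine tsum_congr fun m => ?_
  simp only [gterm, th, freqTerm, dampedInv, centeredFract, Fin.cons_zero, Fin.cons_succ,
    prod_div_distrib]
  rw [div_eq_mul_inv, mul_inv]
  ring

theorem indicator_freqTerm_neg {d : ℕ} (s N : ℕ) {α : Fin d → ℝ} (hα : ∀ i, Irrational (α i))
    (m : ℤ) : (freqSet s N α).indicator (freqTerm N α) (-m) =
      (-1) ^ (d + 1) * (freqSet s N α).indicator (freqTerm N α) m := by
  have hmem : -m ∈ freqSet s N α ↔ m ∈ freqSet s N α := by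
    simp only [freqSet, Set.mem_ofPred_eq, distProd, Int.cast_neg, abs_neg, neg_mul, nid_neg]
  by_cases hm : m ∈ freqSet s N α
  · have hm0 : m ≠ 0 := fun h0 => by norm_num [h0, freqSet] at hm
    have hfract (i : Fin d) : centeredFract (-(m * α i)) = -centeredFract (m * α i) :=
      centeredFract_neg ((hα i).intCast_mul hm0)
    rw [Set.indicator_of_mem (hmem.2 hm), Set.indicator_of_mem hm, freqTerm, freqTerm]
    simp only [Int.cast_neg, neg_mul, neg_div, sr_neg, inv_neg, hfract, dampedInv_neg, prod_neg,
      card_univ, Fintype.card_fin]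
    ring
  · rw [Set.indicator_of_notMem (hmem.not.2 hm), Set.indicator_of_notMem hm, mul_zero]

theorem tsum_indicator_freqTerm_eq {d : ℕ} (s N : ℕ) {α : Fin d → ℝ}
    (hα : ∀ i, Irrational (α i)) :
    ∑' m : ℤ, (freqSet s N α).indicator (freqTerm N α) m =
      (1 + (-1) ^ (d + 1)) * posFreqSum s N α := by
  have hpos : HasSum (fun n : ℕ => (freqSet s N α).indicator (freqTerm N α) n)
      (posFreqSum s N α) := by
    refine hasSum_sum_of_ne_finset_zero fun n hn => Set.indicator_of_notMem (fun hmem => hn ?_) _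
    simpa [Nat.lt_ceil] using hmem.2.1
  have hneg : HasSum (fun n : ℕ => (freqSet s N α).indicator (freqTerm N α) (-n))
      ((-1) ^ (d + 1) * posFreqSum s N α) := by
    simpa only [indicator_freqTerm_neg s N hα] using hpos.mul_left _
  have hzero : (freqSet s N α).indicator (freqTerm N α) 0 = 0 := by
    simp [freqTerm]
  rw [(hpos.of_nat_of_neg hneg).tsum_eq, hzero, sub_zero, add_mul, one_mul]

theorem ae_irrational (d : ℕ) :
    ∀ᵐ α : Fin d → ℝ ∂(Measure.pi fun _ => unitMeasure), ∀ i, Irrational (α i) := by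
  have hcoord : ∀ᵐ x ∂unitMeasure, Irrational x :=
    ae_restrict_of_ae ((Set.countable_range ((↑) : ℚ → ℝ)).ae_notMem volume)
  exact ae_all_iff.2 fun i =>
    (Measure.tendsto_eval_ae_ae (μ := fun _ : Fin d => unitMeasure) (i := i)).eventually hcoord

theorem restrict_pi_Icc_eq (d : ℕ) : (volume : Measure (Fin d → ℝ)).restrict
    (Set.univ.pi fun _ : Fin d => Set.Icc (0 : ℝ) 1) = Measure.pi fun _ => unitMeasure := by
  rw [volume_pi, Measure.restrict_pi_pi]
  exact congrArg Measure.pi (funext fun _ => Measure.restrict_congr_set Ioc_ae_eq_Icc.symm)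

theorem stmt_17_general (d s : ℕ) (hs : 2 * d + 5 ≤ s) :
    ∀ᵐ α ∂((volume : Measure (Fin d → ℝ)).restrict
        (Set.univ.pi fun _ : Fin d => Set.Icc (0 : ℝ) 1)),
      ∃ C : ℝ, ∀ N : ℕ, 3 ≤ N →
        |∑' n : U4 d s N α,
            gterm d N α n.1 / ((n.1 0 : ℝ) * ∏ i : Fin d, th α n.1 i)| ≤
          C * Real.log N := by
  rw [restrict_pi_Icc_eq]
  rcases Nat.even_or_odd d with hd | hd
  · filter_upwards [ae_irrational d] with α hα
    refine ⟨0, fun N _ => ?_⟩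
    rw [tsum_U4_eq_tsum_indicator s N hα, tsum_indicator_freqTerm_eq s N hα,
      hd.add_one.neg_one_pow]
    simp
  · obtain ⟨e, rfl⟩ := Nat.exists_eq_add_of_le' hd.pos
    filter_upwards [ae_irrational (e + 1), ae_abs_posFreqSum_le hs] with α hα ⟨C, hC⟩
    refine ⟨2 * C, fun N hN => ?_⟩
    rw [tsum_U4_eq_tsum_indicator s N hα, tsum_indicator_freqTerm_eq s N hα,
      hd.add_one.neg_one_pow, one_add_one_eq_two, abs_mul, abs_two, mul_assoc]
    gcongr
    exact hC N hN

/-- Cancellation of the main terms: for a.e. `α ∈ [0,1]^d`,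
`|D̄₅(α,x;N)| = |∑_{n∈U₄} g(n,α;N)/(n₁∏(n₁α_i−n_{i+1}))| ≤ C·log N`. -/
theorem stmt_17 (d : ℕ) (hd : 1 ≤ d) (s : ℕ) (hs : (d + 2) * d + 3 < s) :
    ∀ᵐ α ∂((volume : Measure (Fin d → ℝ)).restrict
        (Set.univ.pi fun _ : Fin d => Set.Icc (0 : ℝ) 1)),
      ∃ C : ℝ, ∀ N : ℕ, 3 ≤ N →
        |∑' n : U4 d s N α,
            gterm d N α n.1 / ((n.1 0 : ℝ) * ∏ i : Fin d, th α n.1 i)| ≤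
          C * Real.log N :=
  stmt_17_general d s (by nlinarith)
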